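/- arXiv:1909.04699 — 15 statements merged into one kernel-verified Lean document; each statement's English description precedes it below -/
import Mathlib

section
/- Let n ≥ 1 be an integer, β ≥ 0 and α ∈ (0,1). There exists a constant c > 0 depending only on n and β such that for every half-space H ⊆ ℝⁿ, all x, y ∈ H, every r ≥ 0 and every t > 0: ∫_{H \ B((1−α)x + αy, r)} k(αt, x, z) · k((1−α)t, z, y) · δ_H(z)^β dz ≤ c · k(t, x, y) · t^{β/2} · exp(−r²/(8α(1−α)t)) · (1 + (δ_H(x) + δ_H(y))/√t)^β. -/
open MeasureTheory Real
open scoped RealInnerProductSpace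

/-- The global Gaussian heat kernel `k(t,x,y) = (4πt)^(−n/2) exp(−|x−y|²/(4t))` on ℝⁿ. -/
noncomputable def heatKernel (n : ℕ) (t : ℝ) (x y : EuclideanSpace ℝ (Fin n)) : ℝ :=
  (4 * π * t) ^ (-(n : ℝ) / 2) * Real.exp (-‖x - y‖ ^ 2 / (4 * t))

lemma aux_exp {E : Type*} [NormedAddCommGroup E] [InnerProductSpace ℝ E] (x y z : E) (α t : ℝ)
    (h0 : 0 < α) (h1 : α < 1) (ht : 0 < t) :
    -‖x - z‖ ^ 2 / (4 * (α * t)) + -‖z - y‖ ^ 2 / (4 * ((1 - α) * t))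
      = -‖x - y‖ ^ 2 / (4 * t) + -‖z - ((1 - α) • x + α • y)‖ ^ 2 / (4 * (α * (1 - α) * t)) := by
  have e1 : x - y = (x - z) + (z - y) := by abel
  have e2 : z - ((1 - α) • x + α • y) = α • (z - y) - (1 - α) • (x - z) := by module
  rw [e1, e2]
  generalize x - z = a
  generalize z - y = b
  rw [norm_add_sq_real, norm_sub_sq_real, norm_smul, norm_smul, inner_smul_left,
    inner_smul_right, real_inner_comm]
  have h3 : 0 < 1 - α := by linarith
  simp only [Real.norm_eq_abs, mul_pow, sq_abs, conj_trivial]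
  field_simp
  ring

lemma aux_pow (v β : ℝ) (hv : 0 ≤ v) (hβ : 0 ≤ β) :
    (1 + v) ^ β ≤ Real.exp (4 * β ^ 2) * Real.exp (v ^ 2 / 16) := by
  have : (1 + v) ^ β ≤ (Real.exp v) ^ β :=
    Real.rpow_le_rpow (by linarith) (by linarith [Real.add_one_le_exp v]) hβ
  refine this.trans ?_
  rw [← Real.exp_mul, ← Real.exp_add, Real.exp_le_exp]
  nlinarith [sq_nonneg (v / 4 - 2 * β)]

lemma aux_dist (d m D t s β : ℝ) (hd : 0 < d) (hm : 0 ≤ m) (hD : 0 ≤ D) (ht : 0 < t) (hs : 0 < s)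
    (hst : s ≤ t) (hβ : 0 ≤ β) (h : d ≤ D + m) :
    d ^ β ≤ t ^ (β / 2) * (1 + D / √t) ^ β *
      (Real.exp (4 * β ^ 2) * Real.exp (m ^ 2 / (16 * s))) := by
  have hS := Real.sqrt_pos.2 hs
  have hT := Real.sqrt_pos.2 ht
  have hST := Real.sqrt_le_sqrt hst
  have h2 := aux_pow (m / √s) β (by positivity) hβ
  rw [div_pow, Real.sq_sqrt hs.le, div_div, mul_comm s 16] at h2
  have h3 : d ≤ √t * (1 + D / √t) * (1 + m / √s) := by
    have a : √t * (1 + D / √t) = √t + D := by field_simp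
    have b : m ≤ √t * (m / √s) := by
      rw [← mul_div_assoc, le_div_iff₀ hS]; nlinarith
    have c : 0 ≤ D * (m / √s) := by positivity
    rw [a]; nlinarith
  have h4 : t ^ (β / 2) = (√t) ^ β := by
    rw [Real.sqrt_eq_rpow, ← Real.rpow_mul ht.le]; congr 1; ring
  calc d ^ β ≤ (√t * (1 + D / √t) * (1 + m / √s)) ^ β := Real.rpow_le_rpow hd.le h3 hβ
    _ = t ^ (β / 2) * (1 + D / √t) ^ β * (1 + m / √s) ^ β := by
      rw [Real.mul_rpow (by positivity) (by positivity),
        Real.mul_rpow (by positivity) (by positivity), h4]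
    _ ≤ _ := by gcongr

/-- There is a constant `c > 0`, depending only on `n` and `β`, such that for every
`α ∈ (0,1)`, every half-space `H = {z : ⟪z − p, u⟫ > 0}` (with `‖u‖ = 1`), all `x, y ∈ H`,
every `r ≥ 0` and `t > 0`:
`∫_{H \ B((1−α)x+αy, r)} k(αt,x,z) k((1−α)t,z,y) δ_H(z)^β dz`
`≤ c k(t,x,y) t^{β/2} exp(−r²/(8α(1−α)t)) (1 + (δ_H(x)+δ_H(y))/√t)^β`. -/
theorem stmt0 (n : ℕ) (hn : 1 ≤ n) (β : ℝ) (hβ : 0 ≤ β) :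
    ∃ c : ℝ, 0 < c ∧
      ∀ α : ℝ, α ∈ Set.Ioo (0 : ℝ) 1 →
      ∀ p u : EuclideanSpace ℝ (Fin n), ‖u‖ = 1 →
      ∀ x y : EuclideanSpace ℝ (Fin n),
        0 < ⟪x - p, u⟫ → 0 < ⟪y - p, u⟫ →
      ∀ r t : ℝ, 0 ≤ r → 0 < t →
      (∫ z in {z : EuclideanSpace ℝ (Fin n) | 0 < ⟪z - p, u⟫} \
          Metric.ball ((1 - α) • x + α • y) r,
        heatKernel n (α * t) x z * heatKernel n ((1 - α) * t) z y * ⟪z - p, u⟫ ^ β)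
      ≤ c * heatKernel n t x y * t ^ (β / 2) *
          Real.exp (-r ^ 2 / (8 * α * (1 - α) * t)) *
          (1 + (⟪x - p, u⟫ + ⟪y - p, u⟫) / Real.sqrt t) ^ β := by
  refine ⟨Real.exp (4 * β ^ 2) * (4 : ℝ) ^ ((n : ℝ) / 2), by positivity, ?_⟩
  intro α ⟨h0, h1⟩ p u hu x y hx hy r t hr ht
  have h3 : 0 < 1 - α := by linarith
  set w := (1 - α) • x + α • y with hw
  set s := α * (1 - α) * t with hs
  have hsp : 0 < s := by positivity
  have hst : s ≤ t := by
    have : α * (1 - α) ≤ 1 := by nlinarith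
    nlinarith
  set D := ⟪x - p, u⟫ + ⟪y - p, u⟫ with hD
  set K : ℝ := (4 * π * s) ^ (-(n : ℝ) / 2) * heatKernel n t x y * t ^ (β / 2) *
    (1 + D / √t) ^ β * Real.exp (4 * β ^ 2) * Real.exp (-r ^ 2 / (8 * s)) with hK
  have hD0 : 0 ≤ D := by positivity
  have hkp : ∀ (t : ℝ) (x y : EuclideanSpace ℝ (Fin n)), 0 < t → 0 ≤ heatKernel n t x y := by
    intro t x y ht; unfold heatKernel; positivity
  have hK0 : 0 ≤ K := by
    have := hkp t x y ht
    positivity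
  have hkk : ∀ z, heatKernel n (α * t) x z * heatKernel n ((1 - α) * t) z y =
      (4 * π * s) ^ (-(n : ℝ) / 2) * heatKernel n t x y * Real.exp (-‖z - w‖ ^ 2 / (4 * s)) := by
    intro z
    unfold heatKernel
    have hc : (4 * π * (α * t)) ^ (-(n : ℝ) / 2) * (4 * π * ((1 - α) * t)) ^ (-(n : ℝ) / 2) =
        (4 * π * s) ^ (-(n : ℝ) / 2) * (4 * π * t) ^ (-(n : ℝ) / 2) := by
      rw [← Real.mul_rpow (by positivity) (by positivity),
        ← Real.mul_rpow (by positivity) (by positivity)]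
      congr 1
      rw [hs]; ring
    have he := congrArg Real.exp (aux_exp x y z α t h0 h1 ht)
    rw [Real.exp_add, Real.exp_add] at he
    rw [mul_mul_mul_comm, hc, he]
    ring
  have hint0 : Integrable (fun v : EuclideanSpace ℝ (Fin n) =>
      Real.exp (-(1 / (16 * s)) * ‖v‖ ^ 2)) := by
    have := GaussianFourier.integral_rexp_neg_mul_sq_norm (V := EuclideanSpace ℝ (Fin n))
      (b := 1 / (16 * s)) (by positivity)
    refine Integrable.of_integral_ne_zero ?_
    rw [this]; positivity
  have hint : Integrable (fun z : EuclideanSpace ℝ (Fin n) =>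
      K * Real.exp (-(1 / (16 * s)) * ‖z - w‖ ^ 2)) :=
    (hint0.comp_sub_right w).const_mul K
  have hval : ∫ z : EuclideanSpace ℝ (Fin n), K * Real.exp (-(1 / (16 * s)) * ‖z - w‖ ^ 2) =
      K * (16 * π * s) ^ ((n : ℝ) / 2) := by
    rw [integral_const_mul, integral_sub_right_eq_self
      (fun v : EuclideanSpace ℝ (Fin n) => Real.exp (-(1 / (16 * s)) * ‖v‖ ^ 2)) w,
      GaussianFourier.integral_rexp_neg_mul_sq_norm (by positivity)]
    simp only [finrank_euclideanSpace, Fintype.card_fin]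
    congr 2
    field_simp
  have hmeas : MeasurableSet ({z : EuclideanSpace ℝ (Fin n) | 0 < ⟪z - p, u⟫} \
      Metric.ball w r) := by
    refine MeasurableSet.diff (IsOpen.measurableSet ?_) Metric.isOpen_ball.measurableSet
    exact isOpen_lt continuous_const (by fun_prop)
  have key : ∀ z ∈ ({z : EuclideanSpace ℝ (Fin n) | 0 < ⟪z - p, u⟫} \ Metric.ball w r),
      heatKernel n (α * t) x z * heatKernel n ((1 - α) * t) z y * ⟪z - p, u⟫ ^ β ≤
      K * Real.exp (-(1 / (16 * s)) * ‖z - w‖ ^ 2) := by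
    intro z ⟨hz, hzr⟩
    have hz : 0 < ⟪z - p, u⟫ := hz
    have hzr : r ≤ ‖z - w‖ := by simpa [dist_eq_norm] using hzr
    have hdist : ⟪z - p, u⟫ ≤ D + ‖z - w‖ := by
      have e : z - p = (z - w) + ((1 - α) • (x - p) + α • (y - p)) := by rw [hw]; module
      have hc := real_inner_le_norm (z - w) u
      rw [hu, mul_one] at hc
      rw [e, inner_add_left, inner_add_left, real_inner_smul_left, real_inner_smul_left]
      nlinarith
    have h5 := aux_dist _ _ D t s β hz (norm_nonneg (z - w)) hD0 ht hsp hst hβ hdist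
    rw [hkk]
    have hk := hkp t x y ht
    have hE : Real.exp (-‖z - w‖ ^ 2 / (4 * s)) * Real.exp (‖z - w‖ ^ 2 / (16 * s)) ≤
        Real.exp (-r ^ 2 / (8 * s)) * Real.exp (-(1 / (16 * s)) * ‖z - w‖ ^ 2) := by
      rw [← Real.exp_add, ← Real.exp_add, Real.exp_le_exp]
      have hq : r ^ 2 ≤ ‖z - w‖ ^ 2 := by gcongr
      have : 0 ≤ (‖z - w‖ ^ 2 - r ^ 2) / (8 * s) := div_nonneg (by linarith) (by positivity)
      have e : (-r ^ 2 / (8 * s) + -(1 / (16 * s)) * ‖z - w‖ ^ 2) -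
        (-‖z - w‖ ^ 2 / (4 * s) + ‖z - w‖ ^ 2 / (16 * s)) = (‖z - w‖ ^ 2 - r ^ 2) / (8 * s) := by
        field_simp; ring
      linarith
    calc _ ≤ (4 * π * s) ^ (-(n : ℝ) / 2) * heatKernel n t x y *
          Real.exp (-‖z - w‖ ^ 2 / (4 * s)) * (t ^ (β / 2) * (1 + D / √t) ^ β *
          (Real.exp (4 * β ^ 2) * Real.exp (‖z - w‖ ^ 2 / (16 * s)))) := by gcongr
      _ = ((4 * π * s) ^ (-(n : ℝ) / 2) * heatKernel n t x y * t ^ (β / 2) *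
          (1 + D / √t) ^ β * Real.exp (4 * β ^ 2)) *
          (Real.exp (-‖z - w‖ ^ 2 / (4 * s)) * Real.exp (‖z - w‖ ^ 2 / (16 * s))) := by ring
      _ ≤ ((4 * π * s) ^ (-(n : ℝ) / 2) * heatKernel n t x y * t ^ (β / 2) *
          (1 + D / √t) ^ β * Real.exp (4 * β ^ 2)) *
          (Real.exp (-r ^ 2 / (8 * s)) * Real.exp (-(1 / (16 * s)) * ‖z - w‖ ^ 2)) := by gcongr
      _ = _ := by rw [hK]; ring
  have hc : (4 * π * s) ^ (-(n : ℝ) / 2) * (16 * π * s) ^ ((n : ℝ) / 2) = 4 ^ ((n : ℝ) / 2) := by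
    have e : 16 * π * s = 4 * (4 * π * s) := by ring
    have hq : 0 < 4 * π * s := by positivity
    rw [e]
    generalize 4 * π * s = q at hq
    rw [Real.mul_rpow (by norm_num) hq.le, neg_div, Real.rpow_neg hq.le]
    have : q ^ ((n : ℝ) / 2) ≠ 0 := by positivity
    field_simp
  calc _ ≤ ∫ z in ({z : EuclideanSpace ℝ (Fin n) | 0 < ⟪z - p, u⟫} \ Metric.ball w r),
        K * Real.exp (-(1 / (16 * s)) * ‖z - w‖ ^ 2) := by
        refine integral_mono_of_nonneg ?_ hint.restrict ?_
        · filter_upwards [ae_restrict_mem hmeas] with z hz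
          have hz' : 0 < ⟪z - p, u⟫ := hz.1
          have a1 := hkp (α * t) x z (by positivity)
          have a2 := hkp ((1 - α) * t) z y (by positivity)
          simp only [Pi.zero_apply]
          positivity
        · filter_upwards [ae_restrict_mem hmeas] with z hz
          exact key z hz
    _ ≤ ∫ z : EuclideanSpace ℝ (Fin n), K * Real.exp (-(1 / (16 * s)) * ‖z - w‖ ^ 2) :=
        setIntegral_le_integral hint (Filter.Eventually.of_forall fun z => by
          simp only [Pi.zero_apply]; positivity)
    _ = _ := by
        have e8 : 8 * α * (1 - α) * t = 8 * s := by rw [hs]; ring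
        rw [hval, e8, ← hc, hK]
        ring
end

section
/- Let n ≥ 1 be an integer. There exists a constant C > 0 depending only on n such that for every half-space H ⊆ ℝⁿ, all x, y ∈ H, every α ∈ (0,1), every r > 0 and every t > 0: ∫_{H \ B((1−α)x + αy, r)} k_H(αt, x, z) · k_H((1−α)t, z, y) dz ≤ C · k_H(t, x, y) · exp(−r²/(8α(1−α)t)) / (α(1−α)). -/
open MeasureTheory Real
open scoped RealInnerProductSpace

/-- The Dirichlet heat kernel of the half-space `H = {z : ⟪z − p, u⟫ > 0}` (where `‖u‖ = 1`):
`k_H(t,x,y) = (1 − exp(−δ_H(x)δ_H(y)/t)) k(t,x,y)` with `δ_H(z) = ⟪z − p, u⟫`. -/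
noncomputable def halfSpaceKernel (n : ℕ) (p u : EuclideanSpace ℝ (Fin n)) (t : ℝ)
    (x y : EuclideanSpace ℝ (Fin n)) : ℝ :=
  (1 - Real.exp (-(⟪x - p, u⟫ * ⟪y - p, u⟫) / t)) * heatKernel n t x y


lemma aux_fac (w : ℝ) : 1 - rexp (-w) ≤ w := by
  linarith [Real.add_one_le_exp (-w)]

lemma aux_min (v : ℝ) (hv : 0 < v) : min 1 v ≤ 2 * (1 - rexp (-v)) := by
  rw [Real.exp_neg]
  have h1 : 1 + v ≤ rexp v := by linarith [Real.add_one_le_exp v]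
  have h2 : (rexp v)⁻¹ ≤ (1 + v)⁻¹ := inv_anti₀ (by linarith) h1
  have h3 : min 1 v ≤ 2 * (1 - (1 + v)⁻¹) := by
    have : 2 * (1 - (1 + v)⁻¹) = 2 * v / (1 + v) := by field_simp; ring
    rw [this, le_div_iff₀ (by linarith)]
    rcases le_total 1 v with h | h
    · rw [min_eq_left h]; linarith
    · rw [min_eq_right h]; nlinarith
  linarith

/-- Pointwise bound on the product of the boundary factors. -/
lemma aux_prod (a b c α t q W : ℝ) (ha : 0 < a) (hb : 0 < b) (hc : 0 < c) (h0 : 0 < α)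
    (h1 : α < 1) (hq : 0 < q) (hqt : q ^ 2 = t) (hW : 0 ≤ W)
    (hcW : c ≤ (1 - α) * a + α * b + q * W) :
    (1 - rexp (-(a * c) / (α * t))) * (1 - rexp (-(c * b) / ((1 - α) * t))) ≤
      2 * (1 - rexp (-(a * b) / t)) * (1 + W) ^ 2 / (α * (1 - α)) := by
  have ht : 0 < t := by rw [← hqt]; positivity
  have hβ : 0 < 1 - α := by linarith
  have hαβ : α * (1 - α) ≤ 1 := by nlinarith
  have hv : 0 < a * b / t := by positivity
  set F := 1 - rexp (-(a * c) / (α * t)) with hF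
  set G := 1 - rexp (-(c * b) / ((1 - α) * t)) with hG
  have eF : F = 1 - rexp (-((a * c) / (α * t))) := by rw [hF, neg_div]
  have eG : G = 1 - rexp (-((c * b) / ((1 - α) * t))) := by rw [hG, neg_div]
  have F1 : F ≤ 1 := by rw [hF]; linarith [Real.exp_pos (-(a * c) / (α * t))]
  have G1 : G ≤ 1 := by rw [hG]; linarith [Real.exp_pos (-(c * b) / ((1 - α) * t))]
  have Fw : F ≤ (a * c) / (α * t) := by rw [eF]; exact aux_fac _
  have Gw : G ≤ (c * b) / ((1 - α) * t) := by rw [eG]; exact aux_fac _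
  have F0 : 0 ≤ F := by
    have : 0 < (a * c) / (α * t) := by positivity
    rw [eF]; linarith [Real.exp_le_one_iff.2 (neg_nonpos.2 this.le)]
  have G0 : 0 ≤ G := by
    have : 0 < (c * b) / ((1 - α) * t) := by positivity
    rw [eG]; linarith [Real.exp_le_one_iff.2 (neg_nonpos.2 this.le)]
  have hmin := aux_min _ hv
  rw [neg_div]
  have key : F * G ≤ min 1 (a * b / t) * (1 + W) ^ 2 / (α * (1 - α)) := by
    have hW1 : 1 ≤ (1 + W) ^ 2 := by nlinarith
    rcases le_total 1 (a * b / t) with h | h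
    · rw [min_eq_left h, one_mul]
      calc F * G ≤ 1 := by nlinarith
        _ ≤ _ := by rw [le_div_iff₀ (by positivity)]; linarith
    · rw [min_eq_right h]
      by_cases hA : a ≤ q ∧ b ≤ q
      · have hc' : c ≤ q * (1 + W) := by nlinarith [hA.1, hA.2]
        have hc2 : c ^ 2 ≤ t * (1 + W) ^ 2 := by
          rw [← hqt, ← mul_pow]; gcongr
        calc F * G ≤ (a * c) / (α * t) * ((c * b) / ((1 - α) * t)) := by gcongr
          _ = (a * b / t) * (c ^ 2 / t) / (α * (1 - α)) := by field_simp
          _ ≤ _ := by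
            gcongr
            rw [div_le_iff₀ ht]; linarith
      · have hab : a * b ≤ q ^ 2 := by
          rw [hqt]; rwa [div_le_one ht] at h
        rcases le_total a b with hle | hle
        · have hbq : q ≤ b := by
            by_contra hcon
            exact hA ⟨by linarith, by linarith⟩
          have hc' : c ≤ b * (1 + W) := by nlinarith
          calc F * G ≤ F * 1 := by gcongr
            _ ≤ (a * c) / (α * t) := by rw [mul_one]; exact Fw
            _ ≤ (a * (b * (1 + W))) / (α * t) := by gcongr
            _ = (a * b / t) * (1 + W) * (1 - α) / (α * (1 - α)) := by field_simp
            _ ≤ _ := by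
              rw [mul_assoc]
              gcongr
              nlinarith
        · have hbq : q ≤ a := by
            by_contra hcon
            exact hA ⟨by linarith, by linarith⟩
          have hc' : c ≤ a * (1 + W) := by nlinarith
          calc F * G ≤ 1 * G := by gcongr
            _ ≤ (c * b) / ((1 - α) * t) := by rw [one_mul]; exact Gw
            _ ≤ ((a * (1 + W)) * b) / ((1 - α) * t) := by gcongr
            _ = (a * b / t) * (1 + W) * α / (α * (1 - α)) := by field_simp
            _ ≤ _ := by
              rw [mul_assoc]
              gcongr
              nlinarith
  refine key.trans ?_
  gcongr

lemma aux_norm {n : ℕ} (x y z : EuclideanSpace ℝ (Fin n)) (α : ℝ) :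
    (1 - α) * ‖x - z‖ ^ 2 + α * ‖z - y‖ ^ 2 =
      α * (1 - α) * ‖x - y‖ ^ 2 + ‖z - ((1 - α) • x + α • y)‖ ^ 2 := by
  have e1 : x - y = (x - z) + (z - y) := by abel
  have e2 : z - ((1 - α) • x + α • y) = α • (z - y) - (1 - α) • (x - z) := by
    module
  rw [e1, e2]
  generalize x - z = v
  generalize z - y = w
  rw [norm_add_sq_real, norm_sub_sq_real, norm_smul, norm_smul, inner_smul_left,
    inner_smul_right, real_inner_comm v w, mul_pow, mul_pow, Real.norm_eq_abs,
    Real.norm_eq_abs, sq_abs, sq_abs]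
  simp
  ring

lemma aux_heat {n : ℕ} (x y z : EuclideanSpace ℝ (Fin n)) (α t : ℝ) (h0 : 0 < α)
    (h1 : α < 1) (ht : 0 < t) :
    heatKernel n (α * t) x z * heatKernel n ((1 - α) * t) z y =
      heatKernel n t x y * heatKernel n (α * (1 - α) * t) z ((1 - α) • x + α • y) := by
  have hβ : 0 < 1 - α := by linarith
  have hπ := Real.pi_pos
  unfold heatKernel
  rw [mul_mul_mul_comm, mul_mul_mul_comm (_ ^ (-(n : ℝ) / 2)) (rexp (-‖x - y‖ ^ 2 / (4 * t))),
    ← Real.exp_add, ← Real.exp_add,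
    ← Real.mul_rpow (by positivity) (by positivity),
    ← Real.mul_rpow (by positivity) (by positivity)]
  congr 2
  · ring
  · have := aux_norm x y z α
    field_simp
    linarith

lemma aux_W (W : ℝ) : (1 + W) ^ 2 ≤ 32 * rexp (W ^ 2 / 16) := by
  nlinarith [Real.add_one_le_exp (W ^ 2 / 16), sq_nonneg (1 - W)]

/-- There is a constant `C > 0` depending only on `n` such that for every half-space
`H = {z : ⟪z − p, u⟫ > 0}` (with `‖u‖ = 1`), all `x, y ∈ H`, every `α ∈ (0,1)`, `r > 0`,
`t > 0`:
`∫_{H \ B((1−α)x+αy, r)} k_H(αt,x,z) k_H((1−α)t,z,y) dz`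
`≤ C k_H(t,x,y) exp(−r²/(8α(1−α)t)) / (α(1−α))`. -/
theorem stmt1 (n : ℕ) (hn : 1 ≤ n) :
    ∃ C : ℝ, 0 < C ∧
      ∀ p u : EuclideanSpace ℝ (Fin n), ‖u‖ = 1 →
      ∀ x y : EuclideanSpace ℝ (Fin n),
        0 < ⟪x - p, u⟫ → 0 < ⟪y - p, u⟫ →
      ∀ α : ℝ, α ∈ Set.Ioo (0 : ℝ) 1 →
      ∀ r t : ℝ, 0 < r → 0 < t →
      (∫ z in {z : EuclideanSpace ℝ (Fin n) | 0 < ⟪z - p, u⟫} \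
          Metric.ball ((1 - α) • x + α • y) r,
        halfSpaceKernel n p u (α * t) x z * halfSpaceKernel n p u ((1 - α) * t) z y)
      ≤ C * halfSpaceKernel n p u t x y *
          Real.exp (-r ^ 2 / (8 * α * (1 - α) * t)) / (α * (1 - α)) := by
  have hπ := Real.pi_pos
  refine ⟨64 * 2 ^ n, by positivity, ?_⟩
  intro p u hu x y hx hy α hα r t hr ht
  obtain ⟨h0, h1⟩ := hα
  have hβ : 0 < 1 - α := by linarith
  set m := (1 - α) • x + α • y with hm
  set s := α * (1 - α) * t with hs
  have hs0 : 0 < s := by positivity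
  have hst : s ≤ t := by
    rw [hs]
    have : α * (1 - α) ≤ 1 := by nlinarith
    nlinarith
  set K := heatKernel n t x y with hK
  have hK0 : 0 ≤ K := by rw [hK]; unfold heatKernel; positivity
  set E := 1 - rexp (-(⟪x - p, u⟫ * ⟪y - p, u⟫) / t) with hE
  have hE0 : 0 ≤ E := by
    rw [hE, neg_div]
    have : 0 < (⟪x - p, u⟫ * ⟪y - p, u⟫) / t := by positivity
    linarith [Real.exp_le_one_iff.2 (neg_nonpos.2 this.le)]
  set R := rexp (-r ^ 2 / (8 * α * (1 - α) * t)) with hR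
  set A := 64 * E * K * R / (α * (1 - α)) * (4 * π * s) ^ (-(n : ℝ) / 2) with hA
  have hA0 : 0 ≤ A := by positivity
  have hint0 : Integrable (fun z : EuclideanSpace ℝ (Fin n) =>
      rexp (-(1 / (16 * s)) * ‖z‖ ^ 2)) := by
    have := GaussianFourier.integrable_cexp_neg_mul_sq_norm_add (V := EuclideanSpace ℝ (Fin n))
      (b := ((1 / (16 * s) : ℝ) : ℂ)) (by rw [Complex.ofReal_re]; positivity) 0 0
    have h2 := this.re
    refine h2.congr (Filter.Eventually.of_forall fun z => ?_)
    simp only [zero_mul, add_zero]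
    rw [show (-((1 / (16 * s) : ℝ) : ℂ) * (‖z‖ : ℂ) ^ 2) =
      ((-(1 / (16 * s)) * ‖z‖ ^ 2 : ℝ) : ℂ) by push_cast; ring]
    exact Complex.exp_ofReal_re _
  have hint : Integrable (fun z : EuclideanSpace ℝ (Fin n) =>
      A * rexp (-(1 / (16 * s)) * ‖z - m‖ ^ 2)) := (hint0.comp_sub_right m).const_mul A
  have hval : ∫ z : EuclideanSpace ℝ (Fin n), A * rexp (-(1 / (16 * s)) * ‖z - m‖ ^ 2) =
      A * (16 * π * s) ^ ((n : ℝ) / 2) := by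
    rw [integral_const_mul, integral_sub_right_eq_self
      (fun z : EuclideanSpace ℝ (Fin n) => rexp (-(1 / (16 * s)) * ‖z‖ ^ 2)) m,
      GaussianFourier.integral_rexp_neg_mul_sq_norm (by positivity)]
    congr 2
    · field_simp
    · simp
  have hpow : (4 * π * s) ^ (-(n : ℝ) / 2) * (16 * π * s) ^ ((n : ℝ) / 2) = 2 ^ n := by
    have hq : 0 < 4 * π * s := by positivity
    rw [show 16 * π * s = 4 * (4 * π * s) by ring]
    generalize 4 * π * s = q at hq
    rw [Real.mul_rpow (by norm_num) hq.le,
      mul_left_comm, ← Real.rpow_add hq]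
    rw [show -(n : ℝ) / 2 + n / 2 = 0 by ring, Real.rpow_zero, mul_one,
      show (4 : ℝ) = 2 ^ (2 : ℝ) by norm_num, ← Real.rpow_mul (by norm_num),
      show (2 : ℝ) * (n / 2) = n by ring, Real.rpow_natCast]
  have hSm : MeasurableSet ({z : EuclideanSpace ℝ (Fin n) | 0 < ⟪z - p, u⟫} \
      Metric.ball m r) := by
    refine MeasurableSet.diff ?_ measurableSet_ball
    exact (isOpen_lt continuous_const (by fun_prop)).measurableSet
  have hfac : ∀ w : ℝ, 0 ≤ w → 0 ≤ 1 - rexp (-w) := fun w hw => by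
    linarith [Real.exp_le_one_iff.2 (neg_nonpos.2 hw)]
  have step : (∫ z in {z : EuclideanSpace ℝ (Fin n) | 0 < ⟪z - p, u⟫} \ Metric.ball m r,
        halfSpaceKernel n p u (α * t) x z * halfSpaceKernel n p u ((1 - α) * t) z y)
      ≤ ∫ z in {z : EuclideanSpace ℝ (Fin n) | 0 < ⟪z - p, u⟫} \ Metric.ball m r,
        A * rexp (-(1 / (16 * s)) * ‖z - m‖ ^ 2) := by
    refine integral_mono_of_nonneg ?_ hint.integrableOn ?_
    · filter_upwards [ae_restrict_mem hSm] with z hz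
      have hz1 : 0 < ⟪z - p, u⟫ := hz.1
      unfold halfSpaceKernel heatKernel
      have f1 := hfac (⟪x - p, u⟫ * ⟪z - p, u⟫ / (α * t)) (by positivity)
      have f2 := hfac (⟪z - p, u⟫ * ⟪y - p, u⟫ / ((1 - α) * t)) (by positivity)
      rw [← neg_div] at f1 f2
      exact mul_nonneg (mul_nonneg f1 (by positivity)) (mul_nonneg f2 (by positivity))
    · filter_upwards [ae_restrict_mem hSm] with z hz
      have hz1 : 0 < ⟪z - p, u⟫ := hz.1
      have hz2 : r ≤ ‖z - m‖ := by
        have := hz.2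
        rw [Metric.mem_ball, not_lt, dist_eq_norm] at this
        exact this
      set W := ‖z - m‖ / √s with hW
      have hsq : 0 < √s := Real.sqrt_pos.2 hs0
      have hW0 : 0 ≤ W := by positivity
      have hWs : ‖z - m‖ = √s * W := by rw [hW]; field_simp
      have hW2 : W ^ 2 = ‖z - m‖ ^ 2 / s := by rw [hW, div_pow, Real.sq_sqrt hs0.le]
      have hcW : ⟪z - p, u⟫ ≤ (1 - α) * ⟪x - p, u⟫ + α * ⟪y - p, u⟫ + √t * W := by
        have e : z - p = (1 - α) • (x - p) + α • (y - p) + (z - m) := by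
          rw [hm]; module
        have h3 : ⟪z - m, u⟫ ≤ √t * W := by
          calc ⟪z - m, u⟫ ≤ ‖z - m‖ * ‖u‖ := real_inner_le_norm _ _
            _ = √s * W := by rw [hu, mul_one, hWs]
            _ ≤ √t * W := by gcongr
        have h4 : ⟪z - p, u⟫ = (1 - α) * ⟪x - p, u⟫ + α * ⟪y - p, u⟫ + ⟪z - m, u⟫ := by
          conv_lhs => rw [e, inner_add_left, inner_add_left, real_inner_smul_left,
            real_inner_smul_left]
        linarith
      have hp := aux_prod _ _ _ α t √t W hx hy hz1 h0 h1 (Real.sqrt_pos.2 ht)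
        (Real.sq_sqrt ht.le) hW0 hcW
      rw [← hE] at hp
      have hg : rexp (-‖z - m‖ ^ 2 / (4 * s)) ≤ R * rexp (-(W ^ 2 / 8)) := by
        rw [hR, ← Real.exp_add, Real.exp_le_exp, hW2]
        have : r ^ 2 ≤ ‖z - m‖ ^ 2 := by gcongr
        have e8 : 8 * α * (1 - α) * t = 8 * s := by rw [hs]; ring
        rw [e8]
        have : r ^ 2 / (8 * s) ≤ ‖z - m‖ ^ 2 / (8 * s) := by gcongr
        have e1 : -‖z - m‖ ^ 2 / (4 * s) =
          -(‖z - m‖ ^ 2 / (8 * s)) + -(‖z - m‖ ^ 2 / s / 8) := by field_simp; ring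
        rw [e1, neg_div]
        linarith
      have e16 : -(1 / (16 * s)) * ‖z - m‖ ^ 2 = W ^ 2 / 16 + -(W ^ 2 / 8) := by
        rw [hW2]; field_simp; ring
      have hh : heatKernel n s z m ≤
          (4 * π * s) ^ (-(n : ℝ) / 2) * (R * rexp (-(W ^ 2 / 8))) := by
        unfold heatKernel; gcongr
      have hh0 : 0 ≤ heatKernel n s z m := by unfold heatKernel; positivity
      unfold halfSpaceKernel
      rw [mul_mul_mul_comm, aux_heat x y z α t h0 h1 ht, ← hm, ← hs, ← hK, e16, Real.exp_add]
      calc _ ≤ (2 * E * (1 + W) ^ 2 / (α * (1 - α))) * (K * heatKernel n s z m) := by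
              gcongr
        _ ≤ (2 * E * (32 * rexp (W ^ 2 / 16)) / (α * (1 - α))) *
            (K * ((4 * π * s) ^ (-(n : ℝ) / 2) * (R * rexp (-(W ^ 2 / 8))))) := by
              gcongr
              exact aux_W W
        _ = _ := by rw [hA]; ring
  refine step.trans ?_
  refine (setIntegral_le_integral hint
    (Filter.Eventually.of_forall fun z => mul_nonneg hA0 (Real.exp_pos _).le)).trans ?_
  rw [hval, hA, mul_assoc, hpow]
  unfold halfSpaceKernel
  rw [← hE, ← hK]
  apply le_of_eq
  ring
end

section
/- Let n ≥ 1 be an integer. There exists a constant C > 0 depending only on n such that for all x, y ∈ ℝⁿ, every α ∈ (0,1), every r > 0 and every t > 0: ∫_{ℝⁿ \ B((1−α)x + αy, r)} k(αt, x, z) · k((1−α)t, z, y) dz ≤ C · k(t, x, y) · exp(−r²/(8α(1−α)t)). -/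
open MeasureTheory Real

theorem heat_aux_id {n : ℕ} (x y z : EuclideanSpace ℝ (Fin n)) (a : ℝ) :
    (1 - a) * ‖x - z‖ ^ 2 + a * ‖z - y‖ ^ 2
      = a * (1 - a) * ‖x - y‖ ^ 2 + ‖z - ((1 - a) • x + a • y)‖ ^ 2 := by
  have h1 : x - y = (x - z) + (z - y) := by abel
  have h2 : z - ((1 - a) • x + a • y) = a • (z - y) - (1 - a) • (x - z) := by module
  rw [h1, h2]
  generalize x - z = u
  generalize z - y = v
  rw [norm_add_sq_real, norm_sub_sq_real, norm_smul, norm_smul, inner_smul_left,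
    inner_smul_right, mul_pow, mul_pow, real_inner_comm]
  simp only [Real.norm_eq_abs, sq_abs, conj_trivial]
  ring

theorem heat_aux_prod {n : ℕ} (x y z : EuclideanSpace ℝ (Fin n)) (a t : ℝ) (h0 : 0 < a)
    (h1 : 0 < 1 - a) (ht : 0 < t) :
    heatKernel n (a * t) x z * heatKernel n ((1 - a) * t) z y
      = heatKernel n t x y * ((4 * π * (a * (1 - a) * t)) ^ (-(n : ℝ) / 2) *
        Real.exp (-‖z - ((1 - a) • x + a • y)‖ ^ 2 / (4 * (a * (1 - a) * t)))) := by
  unfold heatKernel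
  rw [mul_mul_mul_comm, ← Real.exp_add, mul_mul_mul_comm (_ ^ _) (Real.exp _), ← Real.exp_add,
    ← Real.mul_rpow (by positivity) (by positivity),
    ← Real.mul_rpow (by positivity) (by positivity)]
  congr 2
  · ring
  · have := heat_aux_id x y z a
    have e : ‖z - ((1 - a) • x + a • y)‖ ^ 2 = (1 - a) * ‖x - z‖ ^ 2 + a * ‖z - y‖ ^ 2
      - a * (1 - a) * ‖x - y‖ ^ 2 := by linarith
    rw [e]
    field_simp
    ring

/-- There is a constant `C > 0` depending only on `n` such that for all `x, y ∈ ℝⁿ`,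
`α ∈ (0,1)`, `r > 0` and `t > 0`:
`∫_{ℝⁿ \ B((1−α)x+αy, r)} k(αt,x,z) k((1−α)t,z,y) dz ≤ C k(t,x,y) exp(−r²/(8α(1−α)t))`. -/
theorem stmt2 (n : ℕ) (hn : 1 ≤ n) :
    ∃ C : ℝ, 0 < C ∧
      ∀ x y : EuclideanSpace ℝ (Fin n),
      ∀ α : ℝ, α ∈ Set.Ioo (0 : ℝ) 1 →
      ∀ r t : ℝ, 0 < r → 0 < t →
      (∫ z in (Metric.ball ((1 - α) • x + α • y) r)ᶜ,
        heatKernel n (α * t) x z * heatKernel n ((1 - α) * t) z y)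
      ≤ C * heatKernel n t x y * Real.exp (-r ^ 2 / (8 * α * (1 - α) * t)) := by
  refine ⟨2 ^ ((n : ℝ) / 2), by positivity, ?_⟩
  rintro x y a ⟨h0, h1⟩ r t hr ht
  have h1 : 0 < 1 - a := by linarith
  simp_rw [heat_aux_prod x y _ a t h0 h1 ht]
  have e8 : 8 * a * (1 - a) * t = 8 * (a * (1 - a) * t) := by ring
  rw [e8]
  have hs : 0 < a * (1 - a) * t := by positivity
  generalize a * (1 - a) * t = s at hs
  generalize (1 - a) • x + a • y = w
  have hK : 0 ≤ heatKernel n t x y := by unfold heatKernel; positivity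
  generalize heatKernel n t x y = K at hK
  have hI : ∫ z : EuclideanSpace ℝ (Fin n), Real.exp (-(1 / (8 * s)) * ‖z - w‖ ^ 2)
      = (8 * π * s) ^ ((n : ℝ) / 2) := by
    rw [integral_sub_right_eq_self (fun z : EuclideanSpace ℝ (Fin n) =>
      Real.exp (-(1 / (8 * s)) * ‖z‖ ^ 2)) w,
      GaussianFourier.integral_rexp_neg_mul_sq_norm (by positivity)]
    simp only [finrank_euclideanSpace, Fintype.card_fin]
    congr 1
    field_simp
  have hint : Integrable (fun z : EuclideanSpace ℝ (Fin n) =>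
      Real.exp (-(1 / (8 * s)) * ‖z - w‖ ^ 2)) := by
    by_contra h
    rw [integral_undef h] at hI
    have : 0 < (8 * π * s) ^ ((n : ℝ) / 2) := by positivity
    linarith
  set A := K * (4 * π * s) ^ (-(n : ℝ) / 2) * Real.exp (-r ^ 2 / (8 * s)) with hA
  have hA0 : 0 ≤ A := by positivity
  calc _ ≤ ∫ z in (Metric.ball w r)ᶜ, A * Real.exp (-(1 / (8 * s)) * ‖z - w‖ ^ 2) := by
        refine integral_mono_of_nonneg (Filter.Eventually.of_forall fun z => by positivity)
          (hint.const_mul A).integrableOn ?_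
        filter_upwards [ae_restrict_mem Metric.isOpen_ball.measurableSet.compl] with z hz
        have hz' : r ≤ ‖z - w‖ := by
          simpa [Metric.mem_ball, dist_eq_norm] using hz
        rw [hA, mul_assoc _ (Real.exp _), ← Real.exp_add, ← mul_assoc]
        gcongr
        have : r ^ 2 ≤ ‖z - w‖ ^ 2 := by gcongr
        rw [div_le_iff₀ (by positivity)]
        field_simp
        linarith
    _ ≤ ∫ z, A * Real.exp (-(1 / (8 * s)) * ‖z - w‖ ^ 2) :=
        setIntegral_le_integral (hint.const_mul A)
          (Filter.Eventually.of_forall fun z => by positivity)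
    _ = 2 ^ ((n : ℝ) / 2) * K * Real.exp (-r ^ 2 / (8 * s)) := by
        rw [integral_const_mul, hI, hA, show 8 * π * s = 2 * (4 * π * s) by ring,
          Real.mul_rpow (x := 2) (y := 4 * π * s) (by positivity) (by positivity), neg_div,
          Real.rpow_neg (x := 4 * π * s) (by positivity)]
        have : 0 < (4 * π * s) ^ ((n : ℝ) / 2) := by positivity
        generalize (4 * π * s) ^ ((n : ℝ) / 2) = P at this
        field_simp
end

section
/- Fix real numbers α, β > 3/2. There exists a constant C > 0 depending only on α and β such that for all a, b, t > 0: I_{α,β}(t,a,b) ≤ C · exp(−(a+b)²/t) · [ ((t/a²)^{α−1} + (t/b²)^{β−1}) / t^{α+β−1} + ((a+b)^{α+β−2} / t^{α+β−1}) · √t / (a^{α−1} b^{β−1} √(t + ab)) ]. -/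
open MeasureTheory Real

/-- `I_{α,β}(t,a,b) = ∫₀ᵗ s^(−α) (t−s)^(−β) exp(−a²/s − b²/(t−s)) ds`. -/
noncomputable def Iab (α β t a b : ℝ) : ℝ :=
  ∫ s in Set.Ioo (0 : ℝ) t,
    s ^ (-α) * (t - s) ^ (-β) * Real.exp (-a ^ 2 / s - b ^ 2 / (t - s))

lemma aux_far {w : ℝ} (hw : 0 < w) (h : w ≤ 1 / 2 ∨ 2 ≤ w) : w / 4 ≤ (1 - w) ^ 2 / w := by
  rw [div_le_div_iff₀ (by norm_num) hw]
  rcases h with h | h <;> nlinarith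

lemma aux_gint {z : ℝ} (hz : 0 < z) :
    Integrable (fun w : ℝ => Real.exp (-(z / 2) * (w - 1) ^ 2)) :=
  (integrable_exp_neg_mul_sq (b := z / 2) (by positivity)).comp_sub_right 1

lemma aux_gval (z : ℝ) :
    ∫ w : ℝ, Real.exp (-(z / 2) * (w - 1) ^ 2) = √(π / (z / 2)) := by
  rw [integral_sub_right_eq_self (fun w : ℝ => Real.exp (-(z / 2) * w ^ 2)) 1, integral_gaussian]

lemma aux_gamint {μ z : ℝ} (hμ : 0 < μ) (hz : 0 < z) :
    IntegrableOn (fun w : ℝ => w ^ (μ - 1) * Real.exp (-(z / 4 * w))) (Set.Ioi 0) := by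
  have := integrableOn_rpow_mul_exp_neg_mul_rpow (p := 1) (s := μ - 1) (b := z / 4)
    (by linarith) one_pos (by positivity)
  simpa [neg_mul] using this

lemma aux_pt {μ z w : ℝ} (hμ : 0 < μ) (hz : 0 < z) (hw : 0 < w) :
    w ^ (μ - 1) * Real.exp (-(z * ((1 - w) ^ 2 / w))) ≤
      w ^ (μ - 1) * Real.exp (-(z / 4 * w)) +
        (2 * 2 ^ μ) * Real.exp (-(z / 2) * (w - 1) ^ 2) := by
  by_cases h : w ≤ 1 / 2 ∨ 2 ≤ w
  · have h1 := aux_far hw h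
    have : Real.exp (-(z * ((1 - w) ^ 2 / w))) ≤ Real.exp (-(z / 4 * w)) := by
      apply Real.exp_le_exp.2
      nlinarith
    have h2 : w ^ (μ - 1) * Real.exp (-(z * ((1 - w) ^ 2 / w))) ≤
      w ^ (μ - 1) * Real.exp (-(z / 4 * w)) := by gcongr
    have : 0 ≤ (2 * 2 ^ μ) * Real.exp (-(z / 2) * (w - 1) ^ 2) := by positivity
    linarith
  · push Not at h
    obtain ⟨h1, h2⟩ := h
    have h3 : w ^ (μ - 1) ≤ 2 * 2 ^ μ := by
      rw [Real.rpow_sub_one hw.ne', div_le_iff₀ hw]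
      have : w ^ μ ≤ 2 ^ μ := Real.rpow_le_rpow hw.le h2.le hμ.le
      have : (0:ℝ) < 2 ^ μ := by positivity
      nlinarith
    have h4 : (1 - w) ^ 2 / 2 ≤ (1 - w) ^ 2 / w := by gcongr
    have h5 : Real.exp (-(z * ((1 - w) ^ 2 / w))) ≤ Real.exp (-(z / 2) * (w - 1) ^ 2) := by
      apply Real.exp_le_exp.2
      nlinarith
    have h6 : 0 ≤ w ^ (μ - 1) * Real.exp (-(z / 4 * w)) := by positivity
    have : w ^ (μ - 1) * Real.exp (-(z * ((1 - w) ^ 2 / w))) ≤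
      (2 * 2 ^ μ) * Real.exp (-(z / 2) * (w - 1) ^ 2) := by gcongr
    linarith

lemma aux_pt_small {μ z w : ℝ} (hz : 0 < z) (hz1 : z ≤ 1) (hw : 0 < w) :
    w ^ (μ - 1) * Real.exp (-(z * ((1 - w) ^ 2 / w))) ≤
      Real.exp (1 / 2) * (w ^ (μ - 1) * Real.exp (-(z / 4 * w))) := by
  have : Real.exp (-(z * ((1 - w) ^ 2 / w))) ≤ Real.exp (1 / 2) * Real.exp (-(z / 4 * w)) := by
    rw [← Real.exp_add]
    apply Real.exp_le_exp.2
    rcases le_total 2 w with h | h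
    · have := aux_far hw (Or.inr h)
      nlinarith
    · have : 0 ≤ (1 - w) ^ 2 / w := by positivity
      nlinarith
  calc _ ≤ w ^ (μ - 1) * (Real.exp (1 / 2) * Real.exp (-(z / 4 * w))) := by gcongr
    _ = _ := by ring

lemma aux_int {μ z : ℝ} (hμ : 0 < μ) (hz : 0 < z) :
    IntegrableOn (fun w : ℝ => w ^ (μ - 1) * Real.exp (-(z * ((1 - w) ^ 2 / w))))
      (Set.Ioi 0) := by
  refine Integrable.mono' (g := fun w => w ^ (μ - 1) * Real.exp (-(z / 4 * w)) +
        (2 * 2 ^ μ) * Real.exp (-(z / 2) * (w - 1) ^ 2)) ?_ ?_ ?_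
  · exact (aux_gamint hμ hz).add ((aux_gint hz).integrableOn.const_mul _)
  · apply Measurable.aestronglyMeasurable
    fun_prop
  · filter_upwards [ae_restrict_mem measurableSet_Ioi] with w hw
    have hw : 0 < w := hw
    rw [Real.norm_of_nonneg (by positivity)]
    exact aux_pt hμ hz hw

lemma aux_G {μ : ℝ} (hμ : 0 < μ) : ∃ C : ℝ, 0 < C ∧ ∀ z : ℝ, 0 < z →
    ∫ w in Set.Ioi (0:ℝ), w ^ (μ - 1) * Real.exp (-(z * ((1 - w) ^ 2 / w))) ≤
      C * (z ^ (-μ) + 1 / √(1 + z)) := by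
  have hΓ := Real.Gamma_pos_of_pos hμ
  refine ⟨Real.exp (1 / 2) * (4 ^ μ * Real.Gamma μ) + 2 * 2 ^ μ * √(4 * π), by positivity, ?_⟩
  intro z hz
  have hgam : ∫ w in Set.Ioi (0:ℝ), w ^ (μ - 1) * Real.exp (-(z / 4 * w)) =
      z ^ (-μ) * (4 ^ μ * Real.Gamma μ) := by
    rw [Real.integral_rpow_mul_exp_neg_mul_Ioi hμ (by positivity)]
    rw [one_div_div, Real.div_rpow (by norm_num) hz.le, Real.rpow_neg hz.le]
    field_simp
  have hR : 0 < 1 / √(1 + z) := by positivity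
  have hZ : 0 < z ^ (-μ) := by positivity
  have hnn : 0 ≤ᵐ[volume.restrict (Set.Ioi (0:ℝ))]
      fun w : ℝ => w ^ (μ - 1) * Real.exp (-(z * ((1 - w) ^ 2 / w))) := by
    filter_upwards [ae_restrict_mem measurableSet_Ioi] with w hw
    have hw : 0 < w := hw
    show (0:ℝ) ≤ _
    positivity
  have e1 : 1 ≤ Real.exp (1 / 2) := Real.one_le_exp (by norm_num)
  have hA : 0 < (4:ℝ) ^ μ * Real.Gamma μ := by positivity
  have hB : 0 < (2:ℝ) * 2 ^ μ * √(4 * π) := by positivity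
  set A := (4:ℝ) ^ μ * Real.Gamma μ
  rcases le_total z 1 with h1 | h1
  · have : ∫ w in Set.Ioi (0:ℝ), w ^ (μ - 1) * Real.exp (-(z * ((1 - w) ^ 2 / w))) ≤
        ∫ w in Set.Ioi (0:ℝ), Real.exp (1 / 2) * (w ^ (μ - 1) * Real.exp (-(z / 4 * w))) := by
      apply integral_mono_of_nonneg hnn ((aux_gamint hμ hz).const_mul _)
      filter_upwards [ae_restrict_mem measurableSet_Ioi] with w hw
      exact aux_pt_small hz h1 hw
    rw [integral_const_mul, hgam] at this
    refine this.trans ?_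
    have : 0 ≤ Real.exp (1 / 2) * A * (1 / √(1 + z)) := by positivity
    have : 0 ≤ (2:ℝ) * 2 ^ μ * √(4 * π) * (z ^ (-μ) + 1 / √(1 + z)) := by positivity
    nlinarith
  · have : ∫ w in Set.Ioi (0:ℝ), w ^ (μ - 1) * Real.exp (-(z * ((1 - w) ^ 2 / w))) ≤
        ∫ w in Set.Ioi (0:ℝ), (w ^ (μ - 1) * Real.exp (-(z / 4 * w)) +
        (2 * 2 ^ μ) * Real.exp (-(z / 2) * (w - 1) ^ 2)) := by
      apply integral_mono_of_nonneg hnn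
        ((aux_gamint hμ hz).add ((aux_gint hz).integrableOn.const_mul _))
      filter_upwards [ae_restrict_mem measurableSet_Ioi] with w hw
      exact aux_pt hμ hz hw
    rw [integral_add (aux_gamint hμ hz) ((aux_gint hz).integrableOn.const_mul _),
      integral_const_mul, hgam] at this
    have h2 : ∫ w in Set.Ioi (0:ℝ), Real.exp (-(z / 2) * (w - 1) ^ 2) ≤ √(π / (z / 2)) := by
      rw [← aux_gval]
      apply setIntegral_le_integral (aux_gint hz)
      filter_upwards with w
      positivity
    have h3 : √(π / (z / 2)) ≤ √(4 * π) * (1 / √(1 + z)) := by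
      rw [← Real.sqrt_one, ← Real.sqrt_div (by norm_num), ← Real.sqrt_mul (by positivity),
        Real.sqrt_one]
      apply Real.sqrt_le_sqrt
      rw [mul_one_div, div_le_div_iff₀ (by positivity) (by positivity)]
      nlinarith [Real.pi_pos]
    have h4 : 2 * 2 ^ μ * ∫ w in Set.Ioi (0:ℝ), Real.exp (-(z / 2) * (w - 1) ^ 2) ≤
      2 * 2 ^ μ * √(4 * π) * (1 / √(1 + z)) := by
      rw [mul_assoc (2 * 2 ^ μ) _ _]
      exact mul_le_mul_of_nonneg_left (h2.trans h3) (by positivity)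
    have : 0 ≤ Real.exp (1 / 2) * A * (1 / √(1 + z)) := by positivity
    have : 0 ≤ (2:ℝ) * 2 ^ μ * √(4 * π) * (z ^ (-μ)) := by positivity
    have : 0 ≤ (Real.exp (1 / 2) - 1) * (A * z ^ (-μ)) := by
      apply mul_nonneg (by linarith) (by positivity)
    nlinarith

lemma aux_inv {μ z w : ℝ} (hw : 0 < w) :
    w ^ ((-1:ℝ) - 1) • ((w ^ (-1:ℝ)) ^ (μ - 1) *
      Real.exp (-(z * ((1 - w ^ (-1:ℝ)) ^ 2 / w ^ (-1:ℝ))))) =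
    w ^ (-(μ + 1)) * Real.exp (-(z * ((1 - w) ^ 2 / w))) := by
  rw [smul_eq_mul, ← mul_assoc, ← Real.rpow_mul hw.le, ← Real.rpow_add hw]
  congr 2
  · ring
  · rw [Real.rpow_neg_one]
    field_simp
    ring

lemma aux_F_int {μ z : ℝ} (hμ : 0 < μ) (hz : 0 < z) :
    IntegrableOn (fun w : ℝ => w ^ (-(μ + 1)) * Real.exp (-(z * ((1 - w) ^ 2 / w))))
      (Set.Ioi 0) := by
  have := (integrableOn_Ioi_comp_rpow_iff' _ (p := -1) (by norm_num)).2 (aux_int hμ hz)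
  exact this.congr_fun (fun w hw => aux_inv hw) measurableSet_Ioi

lemma aux_F_eq (μ z : ℝ) :
    ∫ w in Set.Ioi (0:ℝ), w ^ (-(μ + 1)) * Real.exp (-(z * ((1 - w) ^ 2 / w))) =
    ∫ w in Set.Ioi (0:ℝ), w ^ (μ - 1) * Real.exp (-(z * ((1 - w) ^ 2 / w))) := by
  rw [← integral_comp_rpow_Ioi
    (fun w : ℝ => w ^ (μ - 1) * Real.exp (-(z * ((1 - w) ^ 2 / w)))) (p := -1) (by norm_num)]
  apply setIntegral_congr_fun measurableSet_Ioi
  intro w hw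
  simp only [abs_neg, abs_one, one_mul]
  exact (aux_inv hw).symm

lemma aux_image {t a b : ℝ} (ha : 0 < a) (hb : 0 < b) (ht : 0 < t) :
    (fun w : ℝ => t * a * w / (b + a * w)) '' Set.Ioi 0 = Set.Ioo 0 t := by
  ext s
  constructor
  · rintro ⟨w, hw, rfl⟩
    have hw : 0 < w := hw
    refine ⟨by positivity, ?_⟩
    show t * a * w / (b + a * w) < t
    rw [div_lt_iff₀ (by positivity)]
    nlinarith [mul_pos ht hb]
  · rintro ⟨h0, h1⟩
    have h2 : 0 < t - s := by linarith
    refine ⟨b * s / (a * (t - s)), ?_, ?_⟩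
    · show 0 < b * s / (a * (t - s))
      positivity
    · show t * a * (b * s / (a * (t - s))) / (b + a * (b * s / (a * (t - s)))) = s
      have : b + a * (b * s / (a * (t - s))) = b * t / (t - s) := by
        field_simp
        ring
      rw [this]
      field_simp

lemma aux_cov {α β t a b : ℝ} (ha : 0 < a) (hb : 0 < b) (ht : 0 < t) :
    Iab α β t a b = ∫ w in Set.Ioi (0:ℝ),
      (Real.exp (-(a + b) ^ 2 / t) / t ^ (α + β - 1) / (a ^ (α - 1) * b ^ (β - 1))) *
      (w ^ (-α) * (b + a * w) ^ (α + β - 2) *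
        Real.exp (-(a * b / t * ((1 - w) ^ 2 / w)))) := by
  unfold Iab
  rw [← aux_image ha hb ht, integral_image_eq_integral_abs_deriv_smul
    (f' := fun w => t * a * b / (b + a * w) ^ 2) measurableSet_Ioi]
  · apply setIntegral_congr_fun measurableSet_Ioi
    intro w hw
    have hw : 0 < w := hw
    have hD : 0 < b + a * w := by positivity
    simp only [smul_eq_mul]
    rw [abs_of_pos (by positivity)]
    have h1 : t - t * a * w / (b + a * w) = t * b / (b + a * w) := by
      field_simp
      ring
    rw [h1]
    have h2 : Real.exp (-a ^ 2 / (t * a * w / (b + a * w)) - b ^ 2 / (t * b / (b + a * w))) =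
        Real.exp (-(a + b) ^ 2 / t) * Real.exp (-(a * b / t * ((1 - w) ^ 2 / w))) := by
      rw [← Real.exp_add]
      congr 1
      field_simp
      ring
    rw [h2]
    generalize hDD : b + a * w = D at *
    have h3 : D ^ (α + β - 2) = D ^ α * D ^ β / D ^ 2 := by
      rw [← Real.rpow_natCast, ← Real.rpow_add hD, ← Real.rpow_sub hD]
      norm_num
    have h4 : t ^ (α + β - 1) = t ^ α * t ^ β / t := by
      rw [Real.rpow_sub_one ht.ne', Real.rpow_add ht]
    rw [Real.div_rpow (by positivity) hD.le, Real.div_rpow (by positivity) hD.le,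
      Real.mul_rpow (by positivity) hw.le, Real.mul_rpow ht.le ha.le, Real.mul_rpow ht.le hb.le,
      h3, h4, Real.rpow_sub_one ha.ne', Real.rpow_sub_one hb.ne']
    simp only [Real.rpow_neg ht.le, Real.rpow_neg ha.le, Real.rpow_neg hb.le, Real.rpow_neg hD.le,
      Real.rpow_neg hw.le]
    field_simp
  · intro w hw
    have hw : 0 < w := hw
    have hD : b + a * w ≠ 0 := by positivity
    have h1 : HasDerivAt (fun w : ℝ => t * a * w) (t * a) w := by
      simpa using (hasDerivAt_id w).const_mul (t * a)
    have h2 : HasDerivAt (fun w : ℝ => b + a * w) a w := by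
      simpa using ((hasDerivAt_id w).const_mul a).const_add b
    have := (h1.div h2 hD).hasDerivWithinAt (s := Set.Ioi 0)
    refine this.congr_deriv ?_
    congr 1
    ring
  · intro x hx y hy hxy
    have hx : 0 < x := hx
    have hy : 0 < y := hy
    have h1 : 0 < b + a * x := by positivity
    have h2 : 0 < b + a * y := by positivity
    simp only at hxy
    rw [div_eq_div_iff h1.ne' h2.ne'] at hxy
    have h3 : (t * a * b) * (x - y) = 0 := by linarith
    have h4 : t * a * b ≠ 0 := by positivity
    have := (mul_eq_zero.1 h3).resolve_left h4
    linarith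

lemma aux_pow_s3 {p x y : ℝ} (hp : 0 ≤ p) (hx : 0 < x) (hy : 0 < y) :
    (x + y) ^ p ≤ 2 ^ p * (x ^ p + y ^ p) := by
  rcases le_total x y with h | h
  · calc (x + y) ^ p ≤ (2 * y) ^ p := Real.rpow_le_rpow (by positivity) (by linarith) hp
      _ = 2 ^ p * y ^ p := Real.mul_rpow (by norm_num) hy.le
      _ ≤ _ := by
        have : 0 < x ^ p := by positivity
        gcongr
        linarith
  · calc (x + y) ^ p ≤ (2 * x) ^ p := Real.rpow_le_rpow (by positivity) (by linarith) hp
      _ = 2 ^ p * x ^ p := Real.mul_rpow (by norm_num) hx.le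
      _ ≤ _ := by
        have : 0 < y ^ p := by positivity
        gcongr
        linarith

theorem stmt3 (α β : ℝ) (hα : 3 / 2 < α) (hβ : 3 / 2 < β) :
    ∃ C : ℝ, 0 < C ∧ ∀ a b t : ℝ, 0 < a → 0 < b → 0 < t →
      Iab α β t a b ≤ C * Real.exp (-(a + b) ^ 2 / t) *
        (((t / a ^ 2) ^ (α - 1) + (t / b ^ 2) ^ (β - 1)) / t ^ (α + β - 1) +
          ((a + b) ^ (α + β - 2) / t ^ (α + β - 1)) *
            (Real.sqrt t / (a ^ (α - 1) * b ^ (β - 1) * Real.sqrt (t + a * b)))) := by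
  obtain ⟨C₁, hC₁, H₁⟩ := aux_G (μ := α - 1) (by linarith)
  obtain ⟨C₂, hC₂, H₂⟩ := aux_G (μ := β - 1) (by linarith)
  refine ⟨2 ^ (α + β - 2) * (C₁ + C₂), by positivity, ?_⟩
  intro a b t ha hb ht
  have hz : 0 < a * b / t := by positivity
  have I₁ := aux_F_int (μ := α - 1) (by linarith) hz
  have E₁ := aux_F_eq (α - 1) (a * b / t)
  have I₂ := aux_int (μ := β - 1) (by linarith) hz
  have B₁ := H₁ _ hz
  have B₂ := H₂ _ hz
  rw [← E₁] at B₁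
  rw [show -(α - 1 + 1) = -α by ring] at I₁ B₁
  rw [aux_cov ha hb ht, integral_const_mul]
  have hp : 0 < α + β - 2 := by linarith
  have hmain : ∫ w in Set.Ioi (0:ℝ), (w ^ (-α) * (b + a * w) ^ (α + β - 2) *
        Real.exp (-(a * b / t * ((1 - w) ^ 2 / w)))) ≤
      ∫ w in Set.Ioi (0:ℝ), (2 ^ (α + β - 2) * b ^ (α + β - 2) *
          (w ^ (-α) * Real.exp (-(a * b / t * ((1 - w) ^ 2 / w)))) +
        2 ^ (α + β - 2) * a ^ (α + β - 2) *
          (w ^ (β - 1 - 1) * Real.exp (-(a * b / t * ((1 - w) ^ 2 / w))))) := by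
    apply integral_mono_of_nonneg _ ((I₁.const_mul _).add (I₂.const_mul _))
    · filter_upwards [ae_restrict_mem measurableSet_Ioi] with w hw
      have hw : 0 < w := hw
      have h := aux_pow_s3 hp.le hb (mul_pos ha hw)
      rw [Real.mul_rpow ha.le hw.le] at h
      have h2 : w ^ (β - 1 - 1) = w ^ (-α) * w ^ (α + β - 2) := by
        rw [← Real.rpow_add hw]
        congr 1
        ring
      simp only [Pi.add_apply]
      rw [h2]
      calc _ ≤ w ^ (-α) * (2 ^ (α + β - 2) * (b ^ (α + β - 2) + a ^ (α + β - 2) * w ^ (α + β - 2)))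
            * Real.exp (-(a * b / t * ((1 - w) ^ 2 / w))) := by gcongr
        _ = _ := by ring
    · filter_upwards [ae_restrict_mem measurableSet_Ioi] with w hw
      have hw : 0 < w := hw
      show (0:ℝ) ≤ _
      positivity
  rw [integral_add (I₁.const_mul _) (I₂.const_mul _), integral_const_mul, integral_const_mul]
    at hmain
  set z := a * b / t with hzdef
  have hR : √t / √(t + a * b) = 1 / √(1 + z) := by
    rw [← Real.sqrt_div ht.le, ← Real.sqrt_one, ← Real.sqrt_div (by norm_num), Real.sqrt_one]
    congr 1
    rw [hzdef]
    field_simp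
  have hRpos : 0 < 1 / √(1 + z) := by positivity
  set R := 1 / √(1 + z)
  have hsplit : α + β - 2 = (α - 1) + (β - 1) := by ring
  have ea : a ^ (α + β - 2) = a ^ (α - 1) * a ^ (β - 1) := by rw [hsplit, Real.rpow_add ha]
  have eb : b ^ (α + β - 2) = b ^ (α - 1) * b ^ (β - 1) := by rw [hsplit, Real.rpow_add hb]
  have z1 : b ^ (α + β - 2) / (a ^ (α - 1) * b ^ (β - 1)) * z ^ (-(α - 1)) =
      (t / a ^ 2) ^ (α - 1) := by
    rw [eb, Real.rpow_neg hz.le, ← Real.inv_rpow hz.le]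
    rw [show t / a ^ 2 = (b / a) * z⁻¹ by rw [hzdef]; field_simp]
    rw [Real.mul_rpow (by positivity) (by positivity), Real.div_rpow hb.le ha.le]
    field_simp
  have z2 : a ^ (α + β - 2) / (a ^ (α - 1) * b ^ (β - 1)) * z ^ (-(β - 1)) =
      (t / b ^ 2) ^ (β - 1) := by
    rw [ea, Real.rpow_neg hz.le, ← Real.inv_rpow hz.le]
    rw [show t / b ^ 2 = (a / b) * z⁻¹ by rw [hzdef]; field_simp]
    rw [Real.mul_rpow (by positivity) (by positivity), Real.div_rpow ha.le hb.le]
    field_simp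
  have la : a ^ (α + β - 2) ≤ (a + b) ^ (α + β - 2) :=
    Real.rpow_le_rpow ha.le (by linarith) hp.le
  have lb : b ^ (α + β - 2) ≤ (a + b) ^ (α + β - 2) :=
    Real.rpow_le_rpow hb.le (by linarith) hp.le
  set N := a ^ (α - 1) * b ^ (β - 1) with hN
  have hNpos : 0 < N := by positivity
  have hrhs : (a + b) ^ (α + β - 2) / t ^ (α + β - 1) * (√t / (N * √(t + a * b))) =
      (a + b) ^ (α + β - 2) / N * R / t ^ (α + β - 1) := by
    rw [← hR]
    field_simp
  rw [hrhs, ← add_div]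
  have T1pos : 0 < (t / a ^ 2) ^ (α - 1) := by positivity
  have T2pos : 0 < (t / b ^ 2) ^ (β - 1) := by positivity
  have Spos : 0 < (a + b) ^ (α + β - 2) / N * R := by positivity
  have K1 : b ^ (α + β - 2) / N * (z ^ (-(α - 1)) + R) ≤
      (t / a ^ 2) ^ (α - 1) + (a + b) ^ (α + β - 2) / N * R := by
    rw [mul_add, z1]
    gcongr
  have K2 : a ^ (α + β - 2) / N * (z ^ (-(β - 1)) + R) ≤
      (t / b ^ 2) ^ (β - 1) + (a + b) ^ (α + β - 2) / N * R := by
    rw [mul_add, z2]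
    gcongr
  set T1 := (t / a ^ 2) ^ (α - 1)
  set T2 := (t / b ^ 2) ^ (β - 1)
  set S := (a + b) ^ (α + β - 2) / N * R
  set E := Real.exp (-(a + b) ^ 2 / t)
  have hE : 0 < E := Real.exp_pos _
  calc _ ≤ E / t ^ (α + β - 1) / N * (2 ^ (α + β - 2) * b ^ (α + β - 2) *
          (C₁ * (z ^ (-(α - 1)) + R)) + 2 ^ (α + β - 2) * a ^ (α + β - 2) *
          (C₂ * (z ^ (-(β - 1)) + R))) := by
        refine mul_le_mul_of_nonneg_left (hmain.trans ?_) (by positivity)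
        gcongr
    _ = 2 ^ (α + β - 2) * E / t ^ (α + β - 1) *
          (C₁ * (b ^ (α + β - 2) / N * (z ^ (-(α - 1)) + R)) +
           C₂ * (a ^ (α + β - 2) / N * (z ^ (-(β - 1)) + R))) := by
        field_simp
    _ ≤ 2 ^ (α + β - 2) * E / t ^ (α + β - 1) *
          (C₁ * (T1 + S) + C₂ * (T2 + S)) := by gcongr
    _ ≤ 2 ^ (α + β - 2) * E / t ^ (α + β - 1) *
          ((C₁ + C₂) * (T1 + T2 + S)) := by
        refine mul_le_mul_of_nonneg_left ?_ (by positivity)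
        nlinarith [mul_pos hC₁ T2pos, mul_pos hC₂ T1pos]
    _ = _ := by ring
end

section
/- Fix real numbers α, β > 3/2. There exists a constant c > 0 depending only on α and β such that for all a, b, t > 0: I_{α,β}(t,a,b) ≥ c · exp(−(a+b)²/t) · [ ((t/a²)^{α−1} + (t/b²)^{β−1}) / t^{α+β−1} + ((a+b)^{α+β−2} / t^{α+β−1}) · √t / (a^{α−1} b^{β−1} √(t + ab)) ]. -/
open MeasureTheory Real

lemma aux_bdd (α : ℝ) (hα : 0 < α) (A s : ℝ) (hA : 0 < A) (hs : 0 < s) :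
    s ^ (-α) * Real.exp (-A ^ 2 / s) ≤ (α / A ^ 2) ^ α := by
  have h1 : A ^ 2 / s / α ≤ Real.exp (A ^ 2 / s / α) := by
    linarith [Real.add_one_le_exp (A ^ 2 / s / α)]
  have h2 := Real.rpow_le_rpow (by positivity) h1 hα.le
  rw [← Real.exp_mul, div_mul_cancel₀ _ hα.ne'] at h2
  have h3 : s ^ (-α) = (A ^ 2 / s / α) ^ α * (α / A ^ 2) ^ α := by
    rw [← Real.mul_rpow (by positivity) (by positivity), Real.rpow_neg hs.le,
      ← Real.inv_rpow hs.le]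
    congr 1
    field_simp
  rw [h3, neg_div, Real.exp_neg]
  have h4 : (A ^ 2 / s / α) ^ α * (Real.exp (A ^ 2 / s))⁻¹ ≤ 1 := by
    rw [← div_eq_mul_inv, div_le_one (Real.exp_pos _)]
    exact h2
  have h5 : 0 ≤ (α / A ^ 2) ^ α := by positivity
  nlinarith [mul_le_mul_of_nonneg_right h4 h5]

lemma Iab_integrable (α β A B : ℝ) (hα : 0 < α) (hβ : 0 < β) (hA : 0 < A) (hB : 0 < B) :
    IntegrableOn (fun s : ℝ => s ^ (-α) * (1 - s) ^ (-β) *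
      Real.exp (-A ^ 2 / s - B ^ 2 / (1 - s))) (Set.Ioo 0 1) := by
  refine Measure.integrableOn_of_bounded (M := (α / A ^ 2) ^ α * (β / B ^ 2) ^ β)
    (by simp) ?_ ?_
  · exact Measurable.aestronglyMeasurable (by measurability)
  · refine (ae_restrict_iff' measurableSet_Ioo).2 (Filter.Eventually.of_forall ?_)
    rintro s ⟨h0, h1⟩
    have h1' : 0 < 1 - s := by linarith
    have e1 := aux_bdd α hα A s hA h0
    have e2 := aux_bdd β hβ B (1 - s) hB h1'
    rw [Real.norm_of_nonneg (by positivity)]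
    have : s ^ (-α) * (1 - s) ^ (-β) * Real.exp (-A ^ 2 / s - B ^ 2 / (1 - s)) =
      (s ^ (-α) * Real.exp (-A ^ 2 / s)) * ((1 - s) ^ (-β) * Real.exp (-B ^ 2 / (1 - s))) := by
      rw [sub_eq_add_neg (-A ^ 2 / s), Real.exp_add, ← neg_div]; ring
    rw [this]
    exact mul_le_mul e1 e2 (by positivity) (by positivity)

lemma Iab_window (α β A B : ℝ) (hα : 0 < α) (hβ : 0 < β) (hA : 0 < A) (hB : 0 < B)
    (x y K m : ℝ) (hx : 0 < x) (hxy : x ≤ y) (hy : y < 1) (hm : 0 ≤ m)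
    (hK : ∀ u, x ≤ u → u ≤ y → (A * (1 - u) - B * u) ^ 2 ≤ K * (u * (1 - u)))
    (hmu : ∀ u, x ≤ u → u ≤ y → m ≤ u ^ (-α) * (1 - u) ^ (-β)) :
    m * (Real.exp (-(A + B) ^ 2) * Real.exp (-K)) * (y - x) ≤ Iab α β 1 A B := by
  have hsub : Set.Icc x y ⊆ Set.Ioo 0 1 := fun u hu => ⟨lt_of_lt_of_le hx hu.1, lt_of_le_of_lt hu.2 hy⟩
  have hint := Iab_integrable α β A B hα hβ hA hB
  have h1 : ∫ s in Set.Icc x y, s ^ (-α) * (1 - s) ^ (-β) *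
      Real.exp (-A ^ 2 / s - B ^ 2 / (1 - s)) ≤ Iab α β 1 A B := by
    unfold Iab
    refine setIntegral_mono_set hint ?_ (LE.le.eventuallyLE hsub)
    refine (ae_restrict_iff' measurableSet_Ioo).2 (Filter.Eventually.of_forall ?_)
    rintro s ⟨h0, h1⟩
    have h1' : 0 < 1 - s := by linarith
    simp only [Pi.zero_apply]
    positivity
  refine le_trans ?_ h1
  have h2 : ∫ s in Set.Icc x y, m * (Real.exp (-(A + B) ^ 2) * Real.exp (-K)) =
      m * (Real.exp (-(A + B) ^ 2) * Real.exp (-K)) * (y - x) := by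
    rw [setIntegral_const, Real.volume_real_Icc_of_le hxy, smul_eq_mul, mul_comm]
  rw [← h2]
  refine setIntegral_mono_on continuous_const.integrableOn_Icc (hint.mono_set hsub) measurableSet_Icc ?_
  rintro u ⟨hu1, hu2⟩
  have h0 : 0 < u := by linarith
  have h1 : 0 < 1 - u := by linarith
  refine mul_le_mul (hmu u hu1 hu2) ?_ (by positivity) (by positivity)
  rw [← Real.exp_add]
  apply Real.exp_le_exp.2
  have := hK u hu1 hu2
  have e : -A ^ 2 / u - B ^ 2 / (1 - u) =
      -(A + B) ^ 2 - (A * (1 - u) - B * u) ^ 2 / (u * (1 - u)) := by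
    field_simp
    ring
  rw [e]
  have : (A * (1 - u) - B * u) ^ 2 / (u * (1 - u)) ≤ K := by
    rw [div_le_iff₀ (by positivity)]; exact this
  linarith

lemma Iab_symm (α β t a b : ℝ) (ht : 0 < t) : Iab α β t a b = Iab β α t b a := by
  unfold Iab
  rw [← integral_Ioc_eq_integral_Ioo, ← integral_Ioc_eq_integral_Ioo,
    ← intervalIntegral.integral_of_le ht.le, ← intervalIntegral.integral_of_le ht.le]
  have := intervalIntegral.integral_comp_sub_left (a := 0) (b := t) (fun s : ℝ =>
    s ^ (-α) * (t - s) ^ (-β) * Real.exp (-a ^ 2 / s - b ^ 2 / (t - s))) t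
  simp only [sub_self, sub_zero] at this
  rw [← this]
  congr 1
  ext s
  rw [sub_sub_cancel, mul_comm ((t - s) ^ (-α))]
  congr 2
  ring

lemma Iab_scale (α β r A B : ℝ) (hr : 0 < r) :
    Iab α β (r ^ 2) (A * r) (B * r) = (r ^ 2) ^ (1 - α - β) * Iab α β 1 A B := by
  have ht : 0 < r ^ 2 := by positivity
  unfold Iab
  rw [← integral_Ioc_eq_integral_Ioo, ← integral_Ioc_eq_integral_Ioo,
    ← intervalIntegral.integral_of_le ht.le, ← intervalIntegral.integral_of_le zero_le_one]
  have := intervalIntegral.smul_integral_comp_mul_left (a := 0) (b := 1) (fun s : ℝ =>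
    s ^ (-α) * (r ^ 2 - s) ^ (-β) * Real.exp (-(A * r) ^ 2 / s - (B * r) ^ 2 / (r ^ 2 - s))) (r ^ 2)
  simp only [mul_zero, mul_one] at this
  rw [← this, smul_eq_mul, ← intervalIntegral.integral_const_mul,
    ← intervalIntegral.integral_const_mul]
  apply intervalIntegral.integral_congr
  intro s hs
  rw [Set.uIcc_of_le zero_le_one] at hs
  have h1 : 0 ≤ 1 - s := by linarith [hs.2]
  have e : r ^ 2 - r ^ 2 * s = r ^ 2 * (1 - s) := by ring
  have e1 : -(A * r) ^ 2 / (r ^ 2 * s) = -A ^ 2 / s := by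
    rw [show -(A * r) ^ 2 = r ^ 2 * -A ^ 2 by ring]
    exact mul_div_mul_left _ _ ht.ne'
  have e2 : (B * r) ^ 2 / (r ^ 2 * (1 - s)) = B ^ 2 / (1 - s) := by
    rw [show (B * r) ^ 2 = r ^ 2 * B ^ 2 by ring]
    exact mul_div_mul_left _ _ ht.ne'
  have e3 : (r ^ 2) ^ (1 - α - β) = r ^ 2 * (r ^ 2) ^ (-α) * (r ^ 2) ^ (-β) := by
    rw [sub_eq_add_neg, sub_eq_add_neg, Real.rpow_add ht, Real.rpow_add ht, Real.rpow_one]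
  simp only [e, e1, e2]
  rw [e3, Real.mul_rpow ht.le hs.1, Real.mul_rpow ht.le h1]
  ring

lemma one_le_rpow_neg (x β : ℝ) (hβ : 0 < β) (h0 : 0 < x) (h1 : x ≤ 1) : 1 ≤ x ^ (-β) :=
  Real.one_le_rpow_of_pos_of_le_one_of_nonpos h0 h1 (by linarith)

lemma Iab_p (α β A B p : ℝ) (hα : 0 < α) (hβ : 0 < β) (hA : 0 < A) (hB : 0 < B)
    (hp : 0 < p) (hp1 : p ≤ 1) (hAp : A ≤ p) (hpB : p * B ≤ 1) :
    Real.exp (-9) / 4 * Real.exp (-(A + B) ^ 2) * (1 / p ^ 2) ^ (α - 1) ≤ Iab α β 1 A B := by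
  have hp2 : p ^ 2 ≤ 1 := by nlinarith
  have hA2 : A ^ 2 ≤ p ^ 2 := by gcongr
  have hpp : 0 < p ^ 2 := by positivity
  have hq : (p * B) ^ 2 ≤ 1 := by
    have : 0 < p * B := by positivity
    nlinarith
  have := Iab_window α β A B hα hβ hA hB (p ^ 2 / 4) (p ^ 2 / 2) 9 ((1 / p ^ 2) ^ α)
    (by positivity) (by linarith) (by linarith) (by positivity) ?_ ?_
  · refine le_trans (le_of_eq ?_) this
    rw [Real.rpow_sub_one (by positivity)]
    field_simp
    ring
  · intro u h1 h2
    have hu : 0 < u := by linarith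
    have hu1 : 1 / 2 ≤ 1 - u := by linarith
    have g1 : (A * (1 - u) - B * u) ^ 2 ≤ A ^ 2 * (1 - u) ^ 2 + B ^ 2 * u ^ 2 := by
      have : 0 ≤ A * (1 - u) * (B * u) := by
        have : 0 ≤ 1 - u := by linarith
        positivity
      nlinarith
    have g2 : A ^ 2 * (1 - u) ^ 2 ≤ 4 * (u * (1 - u)) := by
      have : A ^ 2 * (1 - u) ≤ 4 * u := by nlinarith [sq_nonneg A]
      nlinarith
    have g3 : B ^ 2 * u ^ 2 ≤ u * (1 - u) := by
      have : B ^ 2 * u ≤ 1 / 2 := by nlinarith [mul_le_mul_of_nonneg_left h2 (sq_nonneg B)]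
      nlinarith
    have : 0 ≤ u * (1 - u) := by nlinarith
    linarith
  · intro u h1 h2
    have hu : 0 < u := by linarith
    have g1 : (1 / p ^ 2) ^ α ≤ u ^ (-α) := by
      rw [Real.rpow_neg hu.le, ← Real.inv_rpow hu.le, one_div]
      apply Real.rpow_le_rpow (by positivity) _ hα.le
      exact inv_anti₀ hu (by linarith)
    have g2 := one_le_rpow_neg (1 - u) β hβ (by linarith) (by linarith)
    have : 0 ≤ u ^ (-α) := by positivity
    nlinarith

lemma Iab_first (α β A B : ℝ) (hα : 1 < α) (hβ : 1 < β) (hA : 0 < A) (hB : 0 < B)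
    (hAB : A * B ≤ 1) :
    Real.exp (-9) / 4 * Real.exp (-(A + B) ^ 2) * (1 / A ^ 2) ^ (α - 1) ≤ Iab α β 1 A B := by
  rcases le_total A 1 with h | h
  · exact Iab_p α β A B A (by linarith) (by linarith) hA hB hA h le_rfl hAB
  · have := Iab_p β α B A (1 / A) (by linarith) (by linarith) hB hA (by positivity)
      (by rw [div_le_one hA]; exact h) (by rw [le_div_iff₀ hA]; linarith) (by field_simp; rfl)
    rw [Iab_symm _ _ _ _ _ one_pos]
    refine le_trans ?_ this
    rw [add_comm B A]
    gcongr ?_ * ?_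
    have hA2 : 1 ≤ A ^ 2 := by nlinarith
    have : (1 / A ^ 2) ^ (α - 1) ≤ 1 :=
      Real.rpow_le_one (by positivity) (by rw [div_le_one (by positivity)]; exact hA2) (by linarith)
    refine this.trans (Real.one_le_rpow ?_ (by linarith))
    field_simp
    exact hA2

lemma Iab_third (α β A B : ℝ) (hα : 0 < α) (hβ : 0 < β) (hA : 0 < A) (hB : 0 < B)
    (hAB : 1 ≤ A * B) :
    (2 / 3) ^ α * Real.exp (-1) / 2 * Real.exp (-(A + B) ^ 2) *
      (((A + B) / A) ^ (α - 1) * ((A + B) / B) ^ (β - 1) / Real.sqrt (1 + A * B))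
      ≤ Iab α β 1 A B := by
  set S := A + B with hS
  have hSp : 0 < S := by positivity
  set q := Real.sqrt (A * B) with hq
  have hq2 : q ^ 2 = A * B := Real.sq_sqrt (by positivity)
  have hq1 : 1 ≤ q := Real.one_le_sqrt.2 hAB
  have hqle : q ≤ A * B := by nlinarith
  have d1 : q / S ^ 2 / 2 ≤ A / S / 2 := by
    have : q / S ^ 2 ≤ A / S := by
      rw [div_le_div_iff₀ (by positivity) hSp]
      nlinarith [mul_le_mul_of_nonneg_right (show q ≤ A * S by nlinarith) hSp.le]
    linarith
  have d2 : q / S ^ 2 / 2 ≤ B / S / 2 := by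
    have : q / S ^ 2 ≤ B / S := by
      rw [div_le_div_iff₀ (by positivity) hSp]
      nlinarith [mul_le_mul_of_nonneg_right (show q ≤ B * S by nlinarith) hSp.le]
    linarith
  have hsum : A / S + B / S = 1 := by rw [← add_div]; exact div_self hSp.ne'
  have hAS : 0 < A / S := by positivity
  have hBS : 0 < B / S := by positivity
  have hd : 0 < q / S ^ 2 / 2 := by positivity
  have := Iab_window α β A B hα hβ hA hB (A / S) (A / S + q / S ^ 2 / 2) 1
    ((2 / 3) ^ α * (S / A) ^ α * (S / B) ^ β)
    (by positivity) (by linarith) (by linarith) (by positivity) ?_ ?_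
  · refine le_trans ?_ this
    have hs : q ≤ Real.sqrt (1 + A * B) := Real.sqrt_le_sqrt (by linarith)
    have : (S / A) ^ (α - 1) * (S / B) ^ (β - 1) / Real.sqrt (1 + A * B) ≤
        (S / A) ^ (α - 1) * (S / B) ^ (β - 1) / q := by gcongr
    refine (mul_le_mul_of_nonneg_left this (by positivity)).trans (le_of_eq ?_)
    rw [Real.rpow_sub_one (by positivity), Real.rpow_sub_one (by positivity)]
    rw [← hS, add_sub_cancel_left]
    field_simp
    rw [hq2]
  · intro u h1 h2
    have hu : 0 < u := by linarith
    have k1 : B / S / 2 ≤ 1 - u := by linarith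
    have e : A * (1 - u) - B * u = - (S * (u - A / S)) := by
      rw [mul_sub S, mul_div_cancel₀ _ hSp.ne', hS]; ring
    rw [e, neg_sq, mul_pow]
    have k2 : (u - A / S) ^ 2 ≤ (q / S ^ 2 / 2) ^ 2 := by
      apply pow_le_pow_left₀ <;> linarith
    have k3 : A / S * (B / S / 2) ≤ u * (1 - u) := mul_le_mul h1 k1 (by positivity) hu.le
    calc S ^ 2 * (u - A / S) ^ 2 ≤ S ^ 2 * (q / S ^ 2 / 2) ^ 2 := by gcongr
      _ = A / S * (B / S / 2) / 2 := by
        field_simp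
        rw [hq2]
      _ ≤ A / S * (B / S / 2) := by
        have : 0 < A / S * (B / S / 2) := by positivity
        linarith
      _ ≤ _ := by linarith
  · intro u h1 h2
    have hu : 0 < u := by linarith
    have k1 : 0 < 1 - u := by linarith
    rw [← Real.mul_rpow (by positivity) (by positivity)]
    rw [Real.rpow_neg hu.le, ← Real.inv_rpow hu.le, Real.rpow_neg k1.le, ← Real.inv_rpow k1.le]
    have m1 : 2 / 3 * (S / A) ≤ u⁻¹ := by
      rw [show 2 / 3 * (S / A) = (3 / 2 * (A / S))⁻¹ by field_simp]
      exact inv_anti₀ hu (by linarith)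
    have m2 : S / B ≤ (1 - u)⁻¹ := by
      rw [show S / B = (B / S)⁻¹ by field_simp]
      exact inv_anti₀ k1 (by linarith)
    gcongr

lemma first_le_third (α β A B : ℝ) (hα : 3 / 2 < α) (hβ : 3 / 2 < β) (hA : 0 < A) (hB : 0 < B)
    (hAB : 1 ≤ A * B) :
    (1 / A ^ 2) ^ (α - 1) ≤
      2 * (((A + B) / A) ^ (α - 1) * ((A + B) / B) ^ (β - 1) / Real.sqrt (1 + A * B)) := by
  have hs : Real.sqrt (1 + A * B) ≤ 2 * Real.sqrt (A * B) := by
    rw [show (2 : ℝ) * Real.sqrt (A * B) = Real.sqrt (4 * (A * B)) by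
      rw [show (4 : ℝ) * (A * B) = 2 ^ 2 * (A * B) by norm_num,
        Real.sqrt_mul (by positivity : (0 : ℝ) ≤ 2 ^ 2), Real.sqrt_sq (by norm_num : (0 : ℝ) ≤ 2)]]
    exact Real.sqrt_le_sqrt (by linarith)
  have h1 : 1 ≤ ((A + B) / B) ^ (β - 1) := by
    apply Real.one_le_rpow _ (by linarith)
    rw [le_div_iff₀ hB]; linarith
  have h2 : ((A + B) / A) ^ (α - 1) = (1 / A ^ 2) ^ (α - 1) * ((A + B) * A) ^ (α - 1) := by
    rw [← Real.mul_rpow (by positivity) (by positivity)]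
    congr 1
    field_simp
  have h3 : Real.sqrt (A * B) ≤ ((A + B) * A) ^ (α - 1) := by
    rw [Real.sqrt_eq_rpow]
    calc (A * B) ^ (1 / 2 : ℝ) ≤ (A * B) ^ (α - 1) :=
          Real.rpow_le_rpow_of_exponent_le hAB (by linarith)
      _ ≤ _ := Real.rpow_le_rpow (by positivity) (by nlinarith) (by linarith)
  rw [← mul_div_assoc, le_div_iff₀ (by positivity), h2]
  calc (1 / A ^ 2) ^ (α - 1) * Real.sqrt (1 + A * B)
      ≤ (1 / A ^ 2) ^ (α - 1) * (2 * ((A + B) * A) ^ (α - 1)) := by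
        gcongr; linarith
    _ = 2 * ((1 / A ^ 2) ^ (α - 1) * ((A + B) * A) ^ (α - 1) * 1) := by ring
    _ ≤ _ := by gcongr

lemma third_le_first (α β A B : ℝ) (hα : 1 < α) (hβ : 1 < β) (hA : 0 < A) (hB : 0 < B)
    (hAB : A * B ≤ 1) (hle : A ≤ B) :
    ((A + B) / A) ^ (α - 1) * ((A + B) / B) ^ (β - 1) / Real.sqrt (1 + A * B) ≤
      2 ^ (α - 1) * 2 ^ (β - 1) * (1 / A ^ 2) ^ (α - 1) := by
  have hs : 1 ≤ Real.sqrt (1 + A * B) := Real.one_le_sqrt.2 (by nlinarith [mul_pos hA hB])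
  have h1 : ((A + B) / B) ^ (β - 1) ≤ 2 ^ (β - 1) := by
    apply Real.rpow_le_rpow (by positivity) _ (by linarith)
    rw [div_le_iff₀ hB]; linarith
  have h2 : ((A + B) / A) ^ (α - 1) ≤ 2 ^ (α - 1) * (1 / A ^ 2) ^ (α - 1) := by
    rw [← Real.mul_rpow (by positivity) (by positivity)]
    apply Real.rpow_le_rpow (by positivity) _ (by linarith)
    rw [mul_one_div, div_le_div_iff₀ (by positivity) (by positivity)]
    nlinarith
  calc _ ≤ ((A + B) / A) ^ (α - 1) * ((A + B) / B) ^ (β - 1) := div_le_self (by positivity) hs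
    _ ≤ (2 ^ (α - 1) * (1 / A ^ 2) ^ (α - 1)) * 2 ^ (β - 1) := by gcongr
    _ = _ := by ring

lemma main_one (α β : ℝ) (hα : 3 / 2 < α) (hβ : 3 / 2 < β) :
    ∃ c : ℝ, 0 < c ∧ ∀ A B : ℝ, 0 < A → 0 < B →
      c * Real.exp (-(A + B) ^ 2) *
        ((1 / A ^ 2) ^ (α - 1) + (1 / B ^ 2) ^ (β - 1) +
          ((A + B) / A) ^ (α - 1) * ((A + B) / B) ^ (β - 1) / Real.sqrt (1 + A * B))
      ≤ Iab α β 1 A B := by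
  set M : ℝ := 2 ^ (α - 1) * 2 ^ (β - 1) with hM
  have hMp : 0 < M := by positivity
  set k1 : ℝ := Real.exp (-9) / 4 with hk1
  have hk1p : 0 < k1 := by positivity
  set k2 : ℝ := (2 / 3) ^ α * Real.exp (-1) / 2 with hk2
  have hk2p : 0 < k2 := by positivity
  refine ⟨min (k1 / (2 * (1 + M))) (k2 / 5), by positivity, ?_⟩
  intro A B hA hB
  set E := Real.exp (-(A + B) ^ 2) with hE
  have hEp : 0 < E := Real.exp_pos _
  set F := (1 / A ^ 2) ^ (α - 1) with hF
  set G := (1 / B ^ 2) ^ (β - 1) with hG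
  set T := ((A + B) / A) ^ (α - 1) * ((A + B) / B) ^ (β - 1) / Real.sqrt (1 + A * B) with hT
  have hFp : 0 < F := by positivity
  have hGp : 0 < G := by positivity
  have hTp : 0 < T := by positivity
  have hTs : T = ((B + A) / B) ^ (β - 1) * ((B + A) / A) ^ (α - 1) / Real.sqrt (1 + B * A) := by
    rw [hT, add_comm B A, mul_comm B A, mul_comm (((A + B) / B) ^ (β - 1))]
  rcases le_total (A * B) 1 with h | h
  · have f1 : k1 * E * F ≤ Iab α β 1 A B := Iab_first α β A B (by linarith) (by linarith) hA hB h
    have f2 : k1 * E * G ≤ Iab α β 1 A B := by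
      have := Iab_first β α B A (by linarith) (by linarith) hB hA (by linarith)
      rw [Iab_symm β α _ _ _ one_pos, add_comm B A] at this
      exact this
    have f3 : T ≤ M * (F + G) := by
      rcases le_total A B with h' | h'
      · have : T ≤ M * F := third_le_first α β A B (by linarith) (by linarith) hA hB h h'
        nlinarith
      · have := third_le_first β α B A (by linarith) (by linarith) hB hA (by linarith) h'
        rw [← hTs, mul_comm ((2 : ℝ) ^ (β - 1)), ← hM, ← hG] at this
        nlinarith
    calc _ ≤ (k1 / (2 * (1 + M))) * E * (F + G + T) := by gcongr; exact min_le_left _ _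
      _ ≤ (k1 / (2 * (1 + M))) * E * ((1 + M) * (F + G)) := by gcongr; linarith
      _ = (k1 * E * F + k1 * E * G) / 2 := by field_simp
      _ ≤ _ := by linarith
  · have f1 : k2 * E * T ≤ Iab α β 1 A B := Iab_third α β A B (by linarith) (by linarith) hA hB h
    have f2 : F ≤ 2 * T := first_le_third α β A B hα hβ hA hB h
    have f3 : G ≤ 2 * T := by
      have := first_le_third β α B A hβ hα hB hA (by linarith)
      rw [← hTs] at this
      exact this
    calc _ ≤ (k2 / 5) * E * (F + G + T) := by gcongr; exact min_le_right _ _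
      _ ≤ (k2 / 5) * E * (5 * T) := by gcongr; linarith
      _ = k2 * E * T := by ring
      _ ≤ _ := f1

/-- For fixed `α, β > 3/2` there is a constant `c > 0` depending only on `α, β` such that
for all `a, b, t > 0`:
`I_{α,β}(t,a,b) ≥ c exp(−(a+b)²/t) (((t/a²)^{α−1} + (t/b²)^{β−1})/t^{α+β−1}`
`+ ((a+b)^{α+β−2}/t^{α+β−1}) √t/(a^{α−1} b^{β−1} √(t+ab)))`. -/
theorem stmt4 (α β : ℝ) (hα : 3 / 2 < α) (hβ : 3 / 2 < β) :
    ∃ c : ℝ, 0 < c ∧ ∀ a b t : ℝ, 0 < a → 0 < b → 0 < t →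
      c * Real.exp (-(a + b) ^ 2 / t) *
        (((t / a ^ 2) ^ (α - 1) + (t / b ^ 2) ^ (β - 1)) / t ^ (α + β - 1) +
          ((a + b) ^ (α + β - 2) / t ^ (α + β - 1)) *
            (Real.sqrt t / (a ^ (α - 1) * b ^ (β - 1) * Real.sqrt (t + a * b))))
      ≤ Iab α β t a b := by
  obtain ⟨c, hc, H⟩ := main_one α β hα hβ
  refine ⟨c, hc, ?_⟩
  intro a b t ha hb ht
  obtain ⟨r, hr, rfl⟩ : ∃ r : ℝ, 0 < r ∧ t = r ^ 2 :=
    ⟨Real.sqrt t, Real.sqrt_pos.2 ht, (Real.sq_sqrt ht.le).symm⟩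
  obtain ⟨A, hA, rfl⟩ : ∃ A : ℝ, 0 < A ∧ a = A * r := ⟨a / r, by positivity, by field_simp⟩
  obtain ⟨B, hB, rfl⟩ : ∃ B : ℝ, 0 < B ∧ b = B * r := ⟨b / r, by positivity, by field_simp⟩
  rw [Iab_scale α β r A B hr]
  have h := mul_le_mul_of_nonneg_left (H A B hA hB)
    (show 0 ≤ (r ^ 2) ^ (1 - α - β) by positivity)
  refine le_trans (le_of_eq ?_) h
  have e1 : -(A * r + B * r) ^ 2 / r ^ 2 = -(A + B) ^ 2 := by field_simp
  have e2 : r ^ 2 / (A * r) ^ 2 = 1 / A ^ 2 := by field_simp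
  have e3 : r ^ 2 / (B * r) ^ 2 = 1 / B ^ 2 := by field_simp
  have e4 : Real.sqrt (r ^ 2 + A * r * (B * r)) = r * Real.sqrt (1 + A * B) := by
    rw [show r ^ 2 + A * r * (B * r) = r ^ 2 * (1 + A * B) by ring,
      Real.sqrt_mul (by positivity), Real.sqrt_sq hr.le]
  have e5 : (A * r + B * r) ^ (α + β - 2) =
      (A + B) ^ (α - 1) * (A + B) ^ (β - 1) * (r ^ (α - 1) * r ^ (β - 1)) := by
    rw [← add_mul, Real.mul_rpow (by positivity) hr.le,
      show α + β - 2 = (α - 1) + (β - 1) by ring, Real.rpow_add (by positivity), Real.rpow_add hr]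
  have e6 : (r ^ 2) ^ (1 - α - β) = ((r ^ 2) ^ (α + β - 1))⁻¹ := by
    rw [← Real.rpow_neg (by positivity)]; congr 1; ring
  rw [e1, e2, e3, e4, e5, e6, Real.sqrt_sq hr.le, Real.mul_rpow hA.le hr.le,
    Real.mul_rpow hB.le hr.le, Real.div_rpow (by positivity) hA.le,
    Real.div_rpow (by positivity) hB.le]
  have p1 : r ^ (α - 1) ≠ 0 := by positivity
  have p2 : r ^ (β - 1) ≠ 0 := by positivity
  have p3 : A ^ (α - 1) ≠ 0 := by positivity
  have p4 : B ^ (β - 1) ≠ 0 := by positivity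
  have p5 : Real.sqrt (1 + A * B) ≠ 0 := by positivity
  have p6 : (r ^ 2) ^ (α + β - 1) ≠ 0 := by positivity
  generalize r ^ (α - 1) = x1 at *
  generalize r ^ (β - 1) = x2 at *
  generalize A ^ (α - 1) = x3 at *
  generalize B ^ (β - 1) = x4 at *
  generalize Real.sqrt (1 + A * B) = x5 at *
  generalize (r ^ 2) ^ (α + β - 1) = x6 at *
  field_simp
end

section
/- For all real α, β > 1 and all a, b, t > 0 the following identity holds: I_{α,β}(t,a,b) = exp(−(a+b)²/t) · ((a+b)/t)^{α+β−1} · ( a^{1−α−β} · J_{α,β}(t,a,b) + b^{1−α−β} · J_{β,α}(t,b,a) ). -/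
open MeasureTheory Real

/-- `J_{α,β}(t,a,b) = ∫₀¹ (1−u)^(−α) (u+b/a)^(−β) exp(−(a+b)²u²/((1−u)t(u+b/a))) du`. -/
noncomputable def Jab (α β t a b : ℝ) : ℝ :=
  ∫ u in Set.Ioo (0 : ℝ) 1,
    (1 - u) ^ (-α) * (u + b / a) ^ (-β) *
      Real.exp (-((a + b) ^ 2 * u ^ 2) / ((1 - u) * t * (u + b / a)))

noncomputable def Fab (α β t a b s : ℝ) : ℝ :=
  s ^ (-α) * (t - s) ^ (-β) * Real.exp (-a ^ 2 / s - b ^ 2 / (t - s))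

lemma aux_half (α β a b t : ℝ) (ha : 0 < a) (hb : 0 < b) (ht : 0 < t) :
    ∫ s in (0 : ℝ)..(t * a / (a + b)), Fab α β t a b s =
      Real.exp (-(a + b) ^ 2 / t) * ((a + b) / t) ^ (α + β - 1) *
      (a ^ (1 - α - β) * Jab α β t a b) := by
  have hab : 0 < a + b := by positivity
  set c := t * a / (a + b) with hc
  have hc0 : 0 < c := by positivity
  have h1 := intervalIntegral.integral_comp_sub_mul (a := 0) (b := 1)
    (Fab α β t a b) hc0.ne' c
  simp only [mul_one, sub_self, mul_zero, sub_zero, smul_eq_mul] at h1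
  have h2 : ∫ s in (0 : ℝ)..c, Fab α β t a b s =
      c * ∫ x in (0 : ℝ)..1, Fab α β t a b (c - c * x) := by
    rw [h1]; field_simp
  have hcp : ((a + b) / t) ^ (α + β - 1) * a ^ (1 - α - β) = c * (c ^ (-α) * c ^ (-β)) := by
    rw [← rpow_add hc0]
    have e0 : c * c ^ (-α + -β) = c ^ (1 + (-α + -β)) := by rw [rpow_add hc0 1, rpow_one]
    rw [e0]
    have e : c = ((a + b) / t)⁻¹ * a := by rw [hc]; field_simp
    rw [e, mul_rpow (by positivity) ha.le, inv_rpow (by positivity), ← rpow_neg (by positivity)]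
    congr 2 <;> ring
  rw [h2, intervalIntegral.integral_of_le zero_le_one, integral_Ioc_eq_integral_Ioo, Jab,
    ← mul_assoc, mul_assoc (Real.exp _), hcp, ← integral_const_mul, ← integral_const_mul]
  apply setIntegral_congr_fun measurableSet_Ioo
  intro u hu
  have hu0 : 0 < u := hu.1
  have hu1 : 0 < 1 - u := by linarith [hu.2]
  have hv : 0 < u + b / a := by positivity
  have es : c - c * u = c * (1 - u) := by ring
  have ets : t - c * (1 - u) = c * (u + b / a) := by rw [hc]; field_simp; ring
  have hw : 0 < u * a + b := by positivity
  have ee : -a ^ 2 / (c * (1 - u)) - b ^ 2 / (c * (u + b / a)) =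
      -(a + b) ^ 2 / t + -((a + b) ^ 2 * u ^ 2) / ((1 - u) * t * (u + b / a)) := by
    have hv' : u + b / a = (u * a + b) / a := by field_simp
    rw [hc, hv']; field_simp; ring
  simp only [Fab]
  rw [es, ets, ee, Real.exp_add, mul_rpow hc0.le hu1.le, mul_rpow hc0.le hv.le]
  ring

lemma aux_bound (α a s : ℝ) (hα : 0 < α) (ha : 0 < a) (hs : 0 < s) :
    s ^ (-α) * Real.exp (-a ^ 2 / s) ≤ (α / a ^ 2) ^ α := by
  have h : a ^ 2 / (α * s) ≤ Real.exp (a ^ 2 / (α * s)) := by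
    linarith [Real.add_one_le_exp (a ^ 2 / (α * s))]
  have h2 := rpow_le_rpow (by positivity) h hα.le
  rw [← Real.exp_mul] at h2
  have e1 : a ^ 2 / (α * s) * α = a ^ 2 / s := by field_simp
  have e2 : a ^ 2 / (α * s) = (α / a ^ 2)⁻¹ * s⁻¹ := by field_simp
  rw [e1, e2, mul_rpow (by positivity) (by positivity), inv_rpow (by positivity),
    inv_rpow hs.le, ← rpow_neg hs.le] at h2
  have hp : 0 < (α / a ^ 2) ^ α := by positivity
  rw [neg_div, Real.exp_neg, ← div_eq_mul_inv, div_le_iff₀ (Real.exp_pos _)]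
  rwa [inv_mul_le_iff₀ hp] at h2

lemma aux_int_s5 (α β a b t : ℝ) (hα : 0 < α) (hβ : 0 < β) (ha : 0 < a) (hb : 0 < b) :
    IntegrableOn (Fab α β t a b) (Set.Ioo 0 t) := by
  have hm : Measurable (Fab α β t a b) := by
    unfold Fab; fun_prop
  refine Measure.integrableOn_of_bounded (M := (α / a ^ 2) ^ α * (β / b ^ 2) ^ β)
    (by simp) hm.aestronglyMeasurable ?_
  refine (ae_restrict_iff' measurableSet_Ioo).2 (Filter.Eventually.of_forall ?_)
  intro s hs
  have hs0 : 0 < s := hs.1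
  have hs1 : 0 < t - s := by linarith [hs.2]
  have e : Fab α β t a b s = (s ^ (-α) * Real.exp (-a ^ 2 / s)) *
      ((t - s) ^ (-β) * Real.exp (-b ^ 2 / (t - s))) := by
    rw [Fab, sub_eq_add_neg (-a ^ 2 / s), Real.exp_add, neg_div (t - s) (b ^ 2)]; ring
  rw [e, Real.norm_of_nonneg (by positivity)]
  exact mul_le_mul (aux_bound α a s hα ha hs0) (aux_bound β b _ hβ hb hs1)
    (by positivity) (by positivity)

/-- For all `α, β > 1` and all `a, b, t > 0`:
`I_{α,β}(t,a,b) = exp(−(a+b)²/t) ((a+b)/t)^{α+β−1}`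
`(a^{1−α−β} J_{α,β}(t,a,b) + b^{1−α−β} J_{β,α}(t,b,a))`. -/
theorem stmt5 (α β : ℝ) (hα : 1 < α) (hβ : 1 < β)
    (a b t : ℝ) (ha : 0 < a) (hb : 0 < b) (ht : 0 < t) :
    Iab α β t a b = Real.exp (-(a + b) ^ 2 / t) * ((a + b) / t) ^ (α + β - 1) *
      (a ^ (1 - α - β) * Jab α β t a b + b ^ (1 - α - β) * Jab β α t b a) := by
  have hI : IntervalIntegrable (Fab α β t a b) volume 0 t := by
    rw [intervalIntegrable_iff_integrableOn_Ioo_of_le ht.le]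
    exact aux_int_s5 α β a b t (by linarith) (by linarith) ha hb
  have hab : 0 < a + b := by positivity
  have hc0 : 0 ≤ t * a / (a + b) := by positivity
  have hct : t * a / (a + b) ≤ t := by
    rw [div_le_iff₀ hab]; nlinarith [mul_pos ht hb]
  have h0 : Iab α β t a b = ∫ s in (0 : ℝ)..t, Fab α β t a b s := by
    rw [intervalIntegral.integral_of_le ht.le, integral_Ioc_eq_integral_Ioo]; rfl
  have hi1 : IntervalIntegrable (Fab α β t a b) volume 0 (t * a / (a + b)) :=
    hI.mono_set (by rw [Set.uIcc_of_le hc0, Set.uIcc_of_le ht.le]; exact Set.Icc_subset_Icc le_rfl hct)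
  have hi2 : IntervalIntegrable (Fab α β t a b) volume (t * a / (a + b)) t :=
    hI.mono_set (by rw [Set.uIcc_of_le hct, Set.uIcc_of_le ht.le]; exact Set.Icc_subset_Icc hc0 le_rfl)
  have h2 : ∫ s in (t * a / (a + b))..t, Fab α β t a b s =
      ∫ s in (0 : ℝ)..(t * b / (b + a)), Fab β α t b a s := by
    have h := intervalIntegral.integral_comp_sub_left (a := 0) (b := t * b / (b + a))
      (Fab α β t a b) t
    have e : t - t * b / (b + a) = t * a / (a + b) := by
      rw [add_comm b a]; field_simp; ring
    rw [e, sub_zero] at h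
    rw [← h]
    congr 1
    funext s
    simp only [Fab, sub_sub_cancel]
    rw [mul_comm ((t - s) ^ (-α))]
    congr 2
    ring
  rw [h0, ← intervalIntegral.integral_add_adjacent_intervals hi1 hi2, h2,
    aux_half α β a b t ha hb ht, aux_half β α b a t hb ha ht, add_comm b a, add_comm β α,
    sub_right_comm 1 β α]
  ring
end

section
/- Fix real numbers α, β > 3/2. There exist constants c, C > 0 depending only on α and β such that for all a, b, t > 0: c · (a/b)^{β−1} · (a/(a+b)) · √(t/(ab + t)) ≤ ∫₀^{1/2} (1−u)^(−α) (u + b/a)^(−β) exp(−(a+b)² u² / ((1−u) t (u + b/a))) du ≤ C · (a/b)^{β−1} · (a/(a+b)) · √(t/(ab + t)). -/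
open MeasureTheory Real

lemma aux_cont (α β r s : ℝ) (hr : 0 < r) (hs : 0 < s) :
    ContinuousOn (fun u : ℝ => (1 - u) ^ (-α) * (u + r) ^ (-β) *
      Real.exp (-((1 + r) ^ 2 * u ^ 2 / ((1 - u) * s * (u + r))))) (Set.Icc 0 (1/2)) := by
  have h1 : ∀ u ∈ Set.Icc (0:ℝ) (1/2), 0 < 1 - u := fun u hu => by linarith [hu.2]
  have h2 : ∀ u ∈ Set.Icc (0:ℝ) (1/2), 0 < u + r := fun u hu => by linarith [hu.1]
  refine ContinuousOn.mul (ContinuousOn.mul ?_ ?_) ?_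
  · exact ContinuousOn.rpow_const (by fun_prop) fun u hu => Or.inl (h1 u hu).ne'
  · exact ContinuousOn.rpow_const (by fun_prop) fun u hu => Or.inl (h2 u hu).ne'
  · refine ContinuousOn.rexp (ContinuousOn.neg (ContinuousOn.div (by fun_prop) (by fun_prop) ?_))
    intro u hu
    have := h1 u hu
    have := h2 u hu
    positivity

lemma aux_lower (α β r s : ℝ) (hα : 0 < α) (hβ : 0 < β) (hr : 0 < r) (hs : 0 < s) :
    (1/2 * 2 ^ (-β) * Real.exp (-1)) * r ^ (1 - β) * (1 / (1 + r)) * √(s / (r + s)) ≤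
    ∫ u in Set.Ioo (0:ℝ) (1/2), (1 - u) ^ (-α) * (u + r) ^ (-β) *
      Real.exp (-((1 + r) ^ 2 * u ^ 2 / ((1 - u) * s * (u + r)))) := by
  set q := √(s / (r + s)) with hq
  have hq0 : 0 < q := Real.sqrt_pos.2 (by positivity)
  have hq2 : q ^ 2 = s / (r + s) := Real.sq_sqrt (by positivity)
  have hq1 : q ≤ 1 := by
    rw [hq, Real.sqrt_le_one, div_le_one (by positivity)]; linarith
  set δ := r / (1 + r) * (1/2) * q with hδ
  have hδ0 : 0 < δ := by positivity
  have hr1 : r / (1 + r) ≤ 1 := by rw [div_le_one (by positivity)]; linarith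
  have hr2 : r / (1 + r) ≤ r := div_le_self hr.le (by linarith)
  have hδ1 : δ ≤ 1/2 := by
    have : r / (1 + r) * q ≤ 1 := mul_le_one₀ hr1 hq0.le hq1
    rw [hδ]; linarith
  have hδ2 : δ ≤ r := by
    have : r / (1 + r) * q ≤ r * 1 := mul_le_mul hr2 hq1 hq0.le hr.le
    rw [hδ]; linarith
  have hδ3 : (1 + r) ^ 2 * δ ^ 2 = r ^ 2 / 4 * (s / (r + s)) := by
    rw [hδ, ← hq2]; field_simp; ring
  have hint : IntegrableOn (fun u : ℝ => (1 - u) ^ (-α) * (u + r) ^ (-β) *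
      Real.exp (-((1 + r) ^ 2 * u ^ 2 / ((1 - u) * s * (u + r))))) (Set.Ioo 0 (1/2)) :=
    ((aux_cont α β r s hr hs).integrableOn_compact isCompact_Icc).mono_set Set.Ioo_subset_Icc_self
  have hsub : Set.Ioo 0 δ ⊆ Set.Ioo (0:ℝ) (1/2) := Set.Ioo_subset_Ioo_right hδ1
  calc _ = ∫ u in Set.Ioo (0:ℝ) δ, (2 * r) ^ (-β) * Real.exp (-1) := by
        rw [setIntegral_const]
        simp only [Measure.real, Real.volume_Ioo, sub_zero, smul_eq_mul,
          ENNReal.toReal_ofReal hδ0.le]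
        rw [Real.mul_rpow (by norm_num) hr.le, show 1 - β = -β + 1 by ring,
          Real.rpow_add_one hr.ne', hδ]
        ring
    _ ≤ ∫ u in Set.Ioo (0:ℝ) δ, _ := by
        refine setIntegral_mono_on (integrableOn_const (by simp)) (hint.mono_set hsub) measurableSet_Ioo ?_
        intro u hu
        obtain ⟨hu0, hu1⟩ := hu
        have h1 : 1 ≤ (1 - u) ^ (-α) :=
          Real.one_le_rpow_of_pos_of_le_one_of_nonpos (by linarith) (by linarith) (by linarith)
        have h2 : (2 * r) ^ (-β) ≤ (u + r) ^ (-β) :=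
          Real.rpow_le_rpow_of_nonpos (by linarith) (by linarith) (by linarith)
        have h3 : Real.exp (-1) ≤ Real.exp (-((1 + r) ^ 2 * u ^ 2 / ((1 - u) * s * (u + r)))) := by
          rw [Real.exp_le_exp, neg_le_neg_iff]
          have hp : 0 < (1 - u) * s * (u + r) :=
            mul_pos (mul_pos (by linarith) hs) (by linarith)
          rw [div_le_one hp]
          have e1 : (1 + r) ^ 2 * u ^ 2 ≤ (1 + r) ^ 2 * δ ^ 2 := by gcongr
          have e2 : r ^ 2 / 4 * (s / (r + s)) ≤ 1/4 * (s * r) := by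
            rw [← mul_div_assoc, div_le_iff₀ (by positivity)]
            have : 0 < r * s * s := by positivity
            nlinarith
          have e3 : 1/2 * s * r ≤ (1 - u) * s * (u + r) := by
            have hp1 : 0 < 1 - u := by linarith
            gcongr <;> linarith
          have : 0 < s * r := by positivity
          linarith
        calc (2 * r) ^ (-β) * Real.exp (-1) = 1 * (2 * r) ^ (-β) * Real.exp (-1) := by ring
          _ ≤ _ := by gcongr
    _ ≤ _ := by
        refine setIntegral_mono_set hint ?_ hsub.eventuallyLE
        refine (ae_restrict_iff' measurableSet_Ioo).2 (Filter.Eventually.of_forall ?_)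
        intro u hu
        have : 0 < 1 - u := by linarith [hu.2]
        have : 0 < u + r := by linarith [hu.1]
        simp only [Pi.zero_apply]
        positivity

lemma aux_upper (α β r s : ℝ) (hα : 0 < α) (hβ : 3/2 < β) (hr : 0 < r) (hs : 0 < s) :
    (∫ u in Set.Ioo (0:ℝ) (1/2), (1 - u) ^ (-α) * (u + r) ^ (-β) *
      Real.exp (-((1 + r) ^ 2 * u ^ 2 / ((1 - u) * s * (u + r))))) ≤
    (4 * 2 ^ α) * r ^ (1 - β) * (1 / (1 + r)) * √(s / (r + s)) := by
  set f := fun u : ℝ => (1 - u) ^ (-α) * (u + r) ^ (-β) *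
      Real.exp (-((1 + r) ^ 2 * u ^ 2 / ((1 - u) * s * (u + r)))) with hf
  have hcont := aux_cont α β r s hr hs
  have hint := hcont.integrableOn_compact (μ := volume) isCompact_Icc
  rw [← integral_Ioc_eq_integral_Ioo, ← intervalIntegral.integral_of_le (by norm_num)]
  set M := (2:ℝ) ^ α * r ^ (3/2 - β) with hM
  have hM0 : 0 < M := by positivity
  set c := (1 + r) / √s with hc
  have hss : √s ^ 2 = s := Real.sq_sqrt hs.le
  have hs0 : 0 < √s := Real.sqrt_pos.2 hs
  have hrr : √r ^ 2 = r := Real.sq_sqrt hr.le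
  have hr0 : 0 < √r := Real.sqrt_pos.2 hr
  have hc0 : 0 < c := by positivity
  have hfb : ∀ u ∈ Set.Ioo (0:ℝ) (1/2),
      f u ≤ M * (1 / √(u + r) ^ 3 * (1 / (1 + (c * (u / √(u + r))) ^ 2))) := by
    intro u ⟨hu0, hu1⟩
    have hur : 0 < u + r := by linarith
    have h1 : (1 - u) ^ (-α) ≤ 2 ^ α := by
      calc (1 - u) ^ (-α) ≤ (1/2) ^ (-α) :=
            Real.rpow_le_rpow_of_nonpos (by norm_num) (by linarith) (by linarith)
        _ = 2 ^ α := by rw [one_div, Real.inv_rpow (by norm_num), Real.rpow_neg (by norm_num), inv_inv]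
    have h2 : (u + r) ^ (-β) ≤ r ^ (3/2 - β) * (1 / √(u + r) ^ 3) := by
      have e : 1 / √(u + r) ^ 3 = (u + r) ^ (-(3/2) : ℝ) := by
        rw [Real.rpow_neg hur.le, Real.sqrt_eq_rpow, ← Real.rpow_natCast, ← Real.rpow_mul hur.le,
          one_div]
        norm_num
      rw [e, show -β = (3/2 - β) + -(3/2) by ring, Real.rpow_add hur]
      gcongr ?_ * _
      exact Real.rpow_le_rpow_of_nonpos hr (by linarith) (by linarith)
    have h3 : Real.exp (-((1 + r) ^ 2 * u ^ 2 / ((1 - u) * s * (u + r)))) ≤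
        1 / (1 + (c * (u / √(u + r))) ^ 2) := by
      rw [Real.exp_neg, one_div]
      apply inv_anti₀ (by positivity)
      have e : (c * (u / √(u + r))) ^ 2 = (1 + r) ^ 2 * u ^ 2 / (1 * s * (u + r)) := by
        rw [hc, mul_pow, div_pow, div_pow, hss, Real.sq_sqrt hur.le]; field_simp
      rw [e, add_comm]
      refine le_trans ?_ (Real.add_one_le_exp _)
      have : 0 < 1 - u := by linarith
      gcongr
      linarith
    have hp : 0 < 1 - u := by linarith
    calc f u ≤ 2 ^ α * (r ^ (3/2 - β) * (1 / √(u + r) ^ 3)) * (1 / (1 + (c * (u / √(u + r))) ^ 2)) := by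
          rw [hf]; dsimp only; gcongr
      _ = _ := by rw [hM]; ring
  have hsd : ∀ u ∈ Set.Ioo (0:ℝ) (1/2),
      HasDerivAt (fun u => √(u + r)) (1 / (2 * √(u + r))) u := by
    intro u hu
    have hur : u + r ≠ 0 := by linarith [hu.1]
    exact ((hasDerivAt_id u).add_const r).sqrt hur
  have hne : ∀ u ∈ Set.Icc (0:ℝ) (1/2), √(u + r) ≠ 0 := fun u hu =>
    (Real.sqrt_pos.2 (by linarith [hu.1])).ne'
  have key : ∫ u in (0:ℝ)..(1/2), f u ≤ M * (4 * (1 / √r) * (1 / (1 + r)) * √(s / (r + s))) := by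
    rcases le_total r s with h | h
    · have hB := intervalIntegral.integral_le_sub_of_hasDeriv_right_of_le
        (g := fun u => M * (-2 * (√(u + r))⁻¹)) (φ := f)
        (g' := fun u => M * (1 / √(u + r) ^ 3)) (a := 0) (b := 1/2) (by norm_num)
        (continuousOn_const.mul (continuousOn_const.mul
          (ContinuousOn.inv₀ (by fun_prop) hne))) ?_ hint ?_
      · refine hB.trans ?_
        rw [← mul_sub, zero_add]
        gcongr
        have hR : 0 < (1/2 + r) := by linarith
        set R := √(1/2 + r) with hRd
        have hRR : R ^ 2 = 1/2 + r := Real.sq_sqrt hR.le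
        have hR0 : 0 < R := Real.sqrt_pos.2 hR
        have hq : 1/2 ≤ √(s / (r + s)) := by
          apply Real.le_sqrt_of_sq_le
          rw [le_div_iff₀ (by positivity)]; linarith
        have e1 : -2 * R⁻¹ - -2 * (√r)⁻¹ = 1 / (√r * R * (R + √r)) := by
          field_simp
          nlinarith
        have e2 : 1 / (√r * R * (R + √r)) ≤ 1 / (√r * ((1 + r)/2)) := by
          apply one_div_le_one_div_of_le (by positivity)
          rw [mul_assoc]
          gcongr
          nlinarith [mul_pos hR0 hr0]
        rw [e1]
        refine e2.trans ?_
        calc 1 / (√r * ((1 + r)/2)) = 4 * (1 / √r) * (1 / (1 + r)) * (1/2) := by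
              field_simp; norm_num
          _ ≤ _ := by gcongr
      · intro u hu
        have hn := hne u (Set.Ioo_subset_Icc_self hu)
        have := (((hsd u hu).inv hn).const_mul (-2)).const_mul M
        refine HasDerivAt.hasDerivWithinAt (this.congr_deriv ?_)
        field_simp
      · intro u hu
        refine (hfb u hu).trans ?_
        have := hu.1
        gcongr
        refine mul_le_of_le_one_right (by positivity) ?_
        rw [div_le_one (by positivity)]
        linarith [sq_nonneg (c * (u / √(u + r)))]
    · have hB := intervalIntegral.integral_le_sub_of_hasDeriv_right_of_le
        (g := fun u => M * (1 / (r * c) * Real.arctan (c * (u / √(u + r))))) (φ := f)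
        (g' := fun u => M * (1 / (r * c) * (1 / (1 + (c * (u / √(u + r))) ^ 2) *
          (c * ((1 * √(u + r) - u * (1 / (2 * √(u + r)))) / √(u + r) ^ 2)))))
        (a := 0) (b := 1/2) (by norm_num)
        (continuousOn_const.mul (continuousOn_const.mul (Real.continuous_arctan.comp_continuousOn
          (continuousOn_const.mul (ContinuousOn.div (by fun_prop) (by fun_prop) hne))))) ?_ hint ?_
      · refine hB.trans ?_
        rw [← mul_sub]
        gcongr
        simp only [zero_div, mul_zero, Real.arctan_zero, sub_zero]
        have h1 : Real.arctan (c * (1/2 / √(1/2 + r))) ≤ 2 :=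
          (Real.arctan_lt_pi_div_two _).le.trans (by linarith [Real.pi_lt_four])
        have hq : √s / (2 * √r) ≤ √(s / (r + s)) := by
          apply Real.le_sqrt_of_sq_le
          rw [div_pow, mul_pow, hss, hrr]
          gcongr
          linarith
        calc _ ≤ 1 / (r * c) * 2 := by gcongr
          _ = 4 * (1 / √r) * (1 / (1 + r)) * (√s / (2 * √r)) := by
              rw [hc]
              nth_rewrite 1 [← hrr]
              field_simp
              norm_num
          _ ≤ _ := by gcongr
      · intro u hu
        have hn := hne u (Set.Ioo_subset_Icc_self hu)
        exact ((((((hasDerivAt_id u).div (hsd u hu) hn).const_mul c).arctan).const_mul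
          (1 / (r * c))).const_mul M).hasDerivWithinAt
      · intro u hu
        refine (hfb u hu).trans ?_
        have hu0 := hu.1
        have hur : 0 < u + r := by linarith
        have hQ : √(u + r) ^ 2 = u + r := Real.sq_sqrt hur.le
        have hQ0 : 0 < √(u + r) := Real.sqrt_pos.2 hur
        set Q := √(u + r)
        have e : (1 * Q - u * (1 / (2 * Q))) / Q ^ 2 = (u / 2 + r) / Q ^ 3 := by
          field_simp
          rw [hQ]; ring
        rw [e]
        have : 1 / (r * c) * (1 / (1 + (c * (u / Q)) ^ 2) * (c * ((u / 2 + r) / Q ^ 3)))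
          = ((u / 2 + r) / r) / Q ^ 3 * (1 / (1 + (c * (u / Q)) ^ 2)) := by
          field_simp
        rw [this]
        gcongr
        rw [one_le_div hr]; linarith
  refine key.trans (le_of_eq ?_)
  have : r ^ (1 - β) = r ^ (3/2 - β) * (1 / √r) := by
    rw [Real.sqrt_eq_rpow, one_div, ← Real.rpow_neg hr.le, ← Real.rpow_add hr]
    congr 1; ring
  rw [hM, this]
  ring

/-- For fixed `α, β > 3/2` there are constants `c, C > 0` depending only on `α, β` such that
for all `a, b, t > 0` the integral
`J⁽¹⁾ = ∫₀^{1/2} (1−u)^(−α) (u+b/a)^(−β) exp(−(a+b)²u²/((1−u)t(u+b/a))) du` satisfies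
`c (a/b)^{β−1} (a/(a+b)) √(t/(ab+t)) ≤ J⁽¹⁾ ≤ C (a/b)^{β−1} (a/(a+b)) √(t/(ab+t))`. -/
theorem stmt6 (α β : ℝ) (hα : 3 / 2 < α) (hβ : 3 / 2 < β) :
    ∃ c C : ℝ, 0 < c ∧ 0 < C ∧ ∀ a b t : ℝ, 0 < a → 0 < b → 0 < t →
      c * (a / b) ^ (β - 1) * (a / (a + b)) * Real.sqrt (t / (a * b + t)) ≤
        (∫ u in Set.Ioo (0 : ℝ) (1 / 2),
          (1 - u) ^ (-α) * (u + b / a) ^ (-β) *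
            Real.exp (-((a + b) ^ 2 * u ^ 2) / ((1 - u) * t * (u + b / a)))) ∧
      (∫ u in Set.Ioo (0 : ℝ) (1 / 2),
          (1 - u) ^ (-α) * (u + b / a) ^ (-β) *
            Real.exp (-((a + b) ^ 2 * u ^ 2) / ((1 - u) * t * (u + b / a)))) ≤
        C * (a / b) ^ (β - 1) * (a / (a + b)) * Real.sqrt (t / (a * b + t)) := by
  refine ⟨1/2 * 2 ^ (-β) * Real.exp (-1), 4 * 2 ^ α, by positivity, by positivity, ?_⟩
  intro a b t ha hb ht
  have hr : 0 < b / a := by positivity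
  have hs : 0 < t / a ^ 2 := by positivity
  have e1 : (a / b) ^ (β - 1) = (b / a) ^ (1 - β) := by
    rw [show 1 - β = -(β - 1) by ring, Real.rpow_neg hr.le, ← Real.inv_rpow hr.le, inv_div]
  have e2 : a / (a + b) = 1 / (1 + b / a) := by field_simp
  have e3 : t / (a * b + t) = t / a ^ 2 / (b / a + t / a ^ 2) := by field_simp
  have e4 : (∫ u in Set.Ioo (0 : ℝ) (1 / 2),
          (1 - u) ^ (-α) * (u + b / a) ^ (-β) *
            Real.exp (-((a + b) ^ 2 * u ^ 2) / ((1 - u) * t * (u + b / a)))) =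
      ∫ u in Set.Ioo (0 : ℝ) (1 / 2), (1 - u) ^ (-α) * (u + b / a) ^ (-β) *
        Real.exp (-((1 + b / a) ^ 2 * u ^ 2 / ((1 - u) * (t / a ^ 2) * (u + b / a)))) := by
    refine setIntegral_congr_fun measurableSet_Ioo ?_
    intro u hu
    have h1 : 0 < 1 - u := by linarith [hu.2]
    have h2 : 0 < u + b / a := by linarith [hu.1]
    dsimp only
    congr 2
    rw [neg_div]
    congr 1
    rw [show (1 + b / a) ^ 2 = (a + b) ^ 2 / a ^ 2 by field_simp]
    generalize u + b / a = x at *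
    field_simp
  rw [e1, e2, e3, e4]
  exact ⟨aux_lower α β _ _ (by linarith) (by linarith) hr hs,
    aux_upper α β _ _ (by linarith) hβ hr hs⟩
end

section
/- Fix real numbers α, β > 3/2. There exist constants c, C > 0 depending only on α and β such that for all a, b, t > 0: c · t^{α−1} · a^{β+1−α} · (a+b)^{1−α−β} · (1 + a(a+b)/t)^{α−2} · exp(−2a(a+b)/t) ≤ ∫_{1/2}^{1} (1−u)^(−α) (u + b/a)^(−β) exp(−(a+b)² u² / ((1−u) t (u + b/a))) du ≤ C · t^{α−1} · a^{β+1−α} · (a+b)^{1−α−β} · (1 + a(a+b)/t)^{α−2} · exp(−a(a+b)/(4t)). -/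
open MeasureTheory Real

lemma aux_bdd_s7 (p : ℝ) : ∃ K : ℝ, 0 < K ∧ ∀ y : ℝ, 0 ≤ y → (1 + y) ^ p * Real.exp (-y / 16) ≤ K := by
  refine ⟨Real.exp (1/16 + |p| * Real.log (16 * (|p| + 1))), Real.exp_pos _, fun y hy => ?_⟩
  have hq : 0 < 16 * (|p| + 1) := by positivity
  have h1 : 0 < 1 + y := by linarith
  rw [Real.rpow_def_of_pos h1, ← Real.exp_add]
  apply Real.exp_le_exp.mpr
  have h2 := Real.log_le_sub_one_of_pos (div_pos h1 hq)
  rw [Real.log_div h1.ne' hq.ne'] at h2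
  have h3 : 0 ≤ Real.log (1 + y) := Real.log_nonneg (by linarith)
  have h4 : Real.log (1 + y) * p ≤ |p| * Real.log (1 + y) := by
    rw [mul_comm]; exact mul_le_mul_of_nonneg_right (le_abs_self p) h3
  have h5 : |p| * Real.log (1 + y) ≤ |p| * ((1 + y) / (16 * (|p| + 1)) + Real.log (16 * (|p| + 1))) :=
    mul_le_mul_of_nonneg_left (by linarith) (abs_nonneg p)
  have h6 : |p| * ((1 + y) / (16 * (|p| + 1))) ≤ (1 + y) / 16 := by
    rw [← mul_div_assoc, div_le_div_iff₀ hq (by norm_num)]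
    nlinarith [abs_nonneg p]
  linarith

lemma aux_int_s7 (α X : ℝ) (hα : 3 / 2 < α) (hX : 0 < X) :
    IntegrableOn (fun u : ℝ => (X + 1 - u) ^ (-α)) (Set.Ioo (1/2) 1) ∧
    ∫ u in Set.Ioo (1/2 : ℝ) 1, (X + 1 - u) ^ (-α) ≤ X ^ (1 - α) / (α - 1) := by
  have hc : ContinuousOn (fun u : ℝ => (X + 1 - u) ^ (-α)) (Set.Icc (1/2) 1) := by
    apply ContinuousOn.rpow_const (by fun_prop)
    intro x hx
    left
    have := hx.2
    linarith
  refine ⟨(hc.integrableOn_Icc).mono_set Set.Ioo_subset_Icc_self, ?_⟩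
  rw [← integral_Ioc_eq_integral_Ioo, ← intervalIntegral.integral_of_le (by norm_num)]
  have hd : ∀ u ∈ Set.uIcc (1/2 : ℝ) 1,
      HasDerivAt (fun u : ℝ => (X + 1 - u) ^ (1 - α) / (α - 1)) ((X + 1 - u) ^ (-α)) u := by
    intro u hu
    rw [Set.uIcc_of_le (by norm_num)] at hu
    have h0 : 0 < X + 1 - u := by have := hu.2; linarith
    have := (((hasDerivAt_id u).const_sub (X + 1)).rpow_const (p := 1 - α) (Or.inl h0.ne')).div_const (α - 1)
    have h1 : α - 1 ≠ 0 := by linarith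
    have h2 : 1 - α - 1 = -α := by ring
    have h3 : -1 * (1 - α) * (X + 1 - id u) ^ (1 - α - 1) / (α - 1) = (X + 1 - u) ^ (-α) := by
      rw [h2, id]
      field_simp
      ring
    rw [h3] at this
    exact this
  rw [intervalIntegral.integral_eq_sub_of_hasDerivAt hd
    (ContinuousOn.intervalIntegrable (by rwa [Set.uIcc_of_le (by norm_num)]))]
  have h3 : 0 ≤ (X + 1 - 1/2) ^ (1 - α) / (α - 1) :=
    div_nonneg (Real.rpow_nonneg (by linarith) _) (by linarith)
  have h4 : X + 1 - 1 = X := by ring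
  rw [h4]
  linarith

lemma aux_core (α β : ℝ) (hα : 3 / 2 < α) (hβ : 3 / 2 < β) :
    ∃ c C : ℝ, 0 < c ∧ 0 < C ∧ ∀ R X : ℝ, 1 < R → 0 < X →
      c * (R ^ (-β) * X ^ (1 - α) * (1 + X) ^ (α - 2)) * Real.exp (-2 * X) ≤
        (∫ u in Set.Ioo (1 / 2 : ℝ) 1,
          (1 - u) ^ (-α) * (u + (R - 1)) ^ (-β) *
            Real.exp (-(R * X * u ^ 2 / ((1 - u) * (u + (R - 1)))))) ∧
      (∫ u in Set.Ioo (1 / 2 : ℝ) 1,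
          (1 - u) ^ (-α) * (u + (R - 1)) ^ (-β) *
            Real.exp (-(R * X * u ^ 2 / ((1 - u) * (u + (R - 1)))))) ≤
        C * (R ^ (-β) * X ^ (1 - α) * (1 + X) ^ (α - 2)) * Real.exp (-X / 4) := by
  obtain ⟨K, hK, hKb⟩ := aux_bdd_s7 α
  obtain ⟨L, hL, hLb⟩ := aux_bdd_s7 (2 - α)
  refine ⟨Real.exp (-2) / 4, 2 ^ β * K * L / (α - 1), by positivity,
    div_pos (by positivity) (by linarith), fun R X hR hX => ?_⟩
  set f : ℝ → ℝ := fun u => (1 - u) ^ (-α) * (u + (R - 1)) ^ (-β) *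
            Real.exp (-(R * X * u ^ 2 / ((1 - u) * (u + (R - 1))))) with hf
  set M : ℝ := 2 ^ β * R ^ (-β) * K * Real.exp (-X / 4) * Real.exp (-X/8) with hM
  have hR0 : 0 < R := by linarith
  have hf0 : ∀ u ∈ Set.Ioo (1/2 : ℝ) 1, 0 ≤ f u := by
    intro u hu
    have h1 := hu.1
    have h2 := hu.2
    have : 0 ≤ (1 - u) ^ (-α) := Real.rpow_nonneg (by linarith) _
    have : 0 ≤ (u + (R - 1)) ^ (-β) := Real.rpow_nonneg (by linarith) _
    positivity
  have hub : ∀ u ∈ Set.Ioo (1/2 : ℝ) 1, f u ≤ M * (X + 1 - u) ^ (-α) := by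
    intro u hu
    have h1 := hu.1
    have h2 := hu.2
    have hv : 0 < 1 - u := by linarith
    have hw : 0 < u + (R - 1) := by linarith
    have e1 : (u + (R - 1)) ^ (-β) ≤ 2 ^ β * R ^ (-β) := by
      have : (u + (R - 1)) ^ (-β) ≤ (R / 2) ^ (-β) :=
        Real.rpow_le_rpow_of_nonpos (by linarith) (by linarith) (by linarith)
      refine this.trans (le_of_eq ?_)
      rw [Real.div_rpow hR0.le (by norm_num), Real.rpow_neg (by norm_num : (0:ℝ) ≤ 2)]
      field_simp
    have e2 : Real.exp (-(R * X * u ^ 2 / ((1 - u) * (u + (R - 1))))) ≤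
        Real.exp (-X/4) * Real.exp (-X/8) * Real.exp (-(X / (1 - u)) / 16) := by
      rw [← Real.exp_add, ← Real.exp_add]
      apply Real.exp_le_exp.mpr
      have a1 : X / (4 * (1 - u)) ≤ R * X * u ^ 2 / ((1 - u) * (u + (R - 1))) := by
        rw [div_le_div_iff₀ (by positivity) (by positivity)]
        have b1 : u + (R - 1) ≤ R * (4 * u ^ 2) := by
          have b0 : 1 ≤ 4 * u ^ 2 := by nlinarith
          nlinarith [mul_le_mul_of_nonneg_left b0 hR0.le]
        have := mul_le_mul_of_nonneg_left b1 (mul_pos hX hv).le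
        nlinarith
      have a2 : X / (4 * (1 - u)) = (X / (1 - u)) / 4 := by field_simp
      have a3 : 2 * X ≤ X / (1 - u) := by
        rw [le_div_iff₀ hv]; nlinarith
      rw [a2] at a1
      linarith
    have e3 : (1 - u) ^ (-α) * Real.exp (-(X / (1 - u)) / 16) ≤ K * (X + 1 - u) ^ (-α) := by
      have := hKb (X / (1 - u)) (by positivity)
      have hs : 0 < X + 1 - u := by linarith
      have b1 : 1 + X / (1 - u) = (X + 1 - u) / (1 - u) := by field_simp; ring
      rw [b1, Real.div_rpow hs.le hv.le] at this
      rw [Real.rpow_neg hv.le, Real.rpow_neg hs.le, ← div_eq_mul_inv, le_div_iff₀ (by positivity)]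
      calc _ = _ := by ring
        _ ≤ K := this
    have p1 : 0 ≤ (1 - u) ^ (-α) := Real.rpow_nonneg hv.le _
    calc f u ≤ (1 - u) ^ (-α) * (2 ^ β * R ^ (-β)) *
          (Real.exp (-X/4) * Real.exp (-X/8) * Real.exp (-(X / (1 - u)) / 16)) := by
          simp only [hf]; gcongr
      _ = (2 ^ β * R ^ (-β)) * (Real.exp (-X/4) * Real.exp (-X/8)) *
          ((1 - u) ^ (-α) * Real.exp (-(X / (1 - u)) / 16)) := by ring
      _ ≤ (2 ^ β * R ^ (-β)) * (Real.exp (-X/4) * Real.exp (-X/8)) * (K * (X + 1 - u) ^ (-α)) := by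
          gcongr
      _ = _ := by rw [hM]; ring
  obtain ⟨hgi, hgb⟩ := aux_int_s7 α X hα hX
  have hfi : IntegrableOn f (Set.Ioo (1/2 : ℝ) 1) := by
    refine Integrable.mono' (hgi.const_mul M) ?_ ?_
    · exact Measurable.aestronglyMeasurable (by fun_prop)
    · filter_upwards [ae_restrict_mem measurableSet_Ioo] with u hu
      rw [Real.norm_of_nonneg (hf0 u hu)]
      exact hub u hu
  constructor
  · set l : ℝ := 1 - X / (2 * X + 1) with hl
    set h : ℝ := 1 - X / (2 * X + 2) with hh
    have hl1 : 1/2 < l := by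
      have : X / (2 * X + 1) < 1/2 := by rw [div_lt_div_iff₀ (by positivity) (by norm_num)]; linarith
      linarith
    have hh1 : h < 1 := by
      have : 0 < X / (2 * X + 2) := by positivity
      linarith
    have hsub : Set.Icc l h ⊆ Set.Ioo (1/2 : ℝ) 1 := fun u hu =>
      ⟨lt_of_lt_of_le hl1 hu.1, lt_of_le_of_lt hu.2 hh1⟩
    have hlen : X / (4 * (1 + X) ^ 2) ≤ h - l := by
      have : h - l = X / ((2 * X + 1) * (2 * X + 2)) := by
        rw [hh, hl]; field_simp; ring
      rw [this]
      apply div_le_div_of_nonneg_left hX.le (by positivity)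
      nlinarith
    have hlh : 0 ≤ h - l := le_trans (by positivity) hlen
    set m : ℝ := (X / (1 + X)) ^ (-α) * R ^ (-β) * Real.exp (-(X + 2)) with hm
    have hm0 : 0 ≤ m := by positivity
    have hlow : ∀ u ∈ Set.Icc l h, m ≤ f u := by
      intro u hu
      have h1 := (hsub hu).1
      have h2 := (hsub hu).2
      have hv : 0 < 1 - u := by linarith
      have hw : 0 < u + (R - 1) := by linarith
      have c1 : 1 - u ≤ X / (2 * X + 1) := by have := hu.1; rw [hl] at this; linarith
      have c2 : X / (2 * X + 2) ≤ 1 - u := by have := hu.2; rw [hh] at this; linarith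
      have d1 : (X / (1 + X)) ^ (-α) ≤ (1 - u) ^ (-α) := by
        apply Real.rpow_le_rpow_of_nonpos hv _ (by linarith)
        refine c1.trans ?_
        apply div_le_div_of_nonneg_left hX.le (by positivity)
        linarith
      have d2 : R ^ (-β) ≤ (u + (R - 1)) ^ (-β) :=
        Real.rpow_le_rpow_of_nonpos hw (by linarith) (by linarith)
      have d3 : R * X * u ^ 2 / ((1 - u) * (u + (R - 1))) ≤ X + 2 := by
        rw [div_le_iff₀ (by positivity)]
        rw [div_le_iff₀ (by positivity)] at c2
        have g1 : R * u ≤ u + (R - 1) := by nlinarith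
        have g2 : X * u ≤ (X + 2) * (1 - u) := by nlinarith
        have g3 := mul_le_mul g2 g1 (by positivity) (by positivity)
        nlinarith
      simp only [hf, hm]
      gcongr
    have I1 : m * (h - l) ≤ ∫ u in Set.Icc l h, f u := by
      have : ∫ u in Set.Icc l h, m = m * (h - l) := by
        rw [setIntegral_const, Real.volume_real_Icc_of_le (by linarith), smul_eq_mul, mul_comm]
      rw [← this]
      apply setIntegral_mono_on (by simp) (hfi.mono_set hsub) measurableSet_Icc hlow
    have I2 : ∫ u in Set.Icc l h, f u ≤ ∫ u in Set.Ioo (1/2 : ℝ) 1, f u := by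
      apply setIntegral_mono_set hfi
      · filter_upwards [ae_restrict_mem measurableSet_Ioo] with u hu using hf0 u hu
      · exact hsub.eventuallyLE
    refine le_trans ?_ (I1.trans I2)
    refine le_trans ?_ (mul_le_mul_of_nonneg_left hlen hm0)
    have hX1 : 0 < 1 + X := by linarith
    have E : m * (X / (4 * (1 + X) ^ 2)) =
        Real.exp (-2) / 4 * (R ^ (-β) * X ^ (1 - α) * (1 + X) ^ (α - 2)) * Real.exp (-X) := by
      rw [hm, Real.div_rpow hX.le hX1.le, Real.rpow_sub hX, Real.rpow_sub hX1, Real.rpow_one,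
        Real.rpow_neg hX.le, Real.rpow_neg hX1.le, neg_add, Real.exp_add, Real.rpow_two]
      field_simp
    rw [E]
    gcongr
    linarith
  · have I1 : ∫ u in Set.Ioo (1/2 : ℝ) 1, f u ≤ ∫ u in Set.Ioo (1/2 : ℝ) 1, M * (X + 1 - u) ^ (-α) :=
      setIntegral_mono_on hfi (hgi.const_mul M) measurableSet_Ioo hub
    refine I1.trans ?_
    rw [integral_const_mul]
    refine (mul_le_mul_of_nonneg_left hgb (by positivity)).trans ?_
    have hX1 : 0 < 1 + X := by linarith
    have hα1 : 0 < α - 1 := by linarith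
    have e : Real.exp (-X / 8) ≤ L * (1 + X) ^ (α - 2) := by
      have h1 := hLb X hX.le
      have h2 : (1 + X) ^ (2 - α) = ((1 + X) ^ (α - 2))⁻¹ := by
        rw [← Real.rpow_neg hX1.le]; congr 1; ring
      rw [h2, inv_mul_le_iff₀ (by positivity)] at h1
      have h3 : Real.exp (-X/8) ≤ Real.exp (-X/16) := Real.exp_le_exp.mpr (by linarith)
      linarith
    calc M * (X ^ (1 - α) / (α - 1)) = 2 ^ β * R ^ (-β) * K * Real.exp (-X / 4) * (X ^ (1 - α) / (α - 1)) * Real.exp (-X/8) := by rw [hM]; ring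
      _ ≤ 2 ^ β * R ^ (-β) * K * Real.exp (-X / 4) * (X ^ (1 - α) / (α - 1)) * (L * (1 + X) ^ (α - 2)) := by gcongr
      _ = _ := by ring

/-- For fixed `α, β > 3/2` there are constants `c, C > 0` depending only on `α, β` such that
for all `a, b, t > 0` the integral
`J⁽²⁾ = ∫_{1/2}^{1} (1−u)^(−α) (u+b/a)^(−β) exp(−(a+b)²u²/((1−u)t(u+b/a))) du` satisfies
`c t^{α−1} a^{β+1−α} (a+b)^{1−α−β} (1+a(a+b)/t)^{α−2} exp(−2a(a+b)/t) ≤ J⁽²⁾`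
`≤ C t^{α−1} a^{β+1−α} (a+b)^{1−α−β} (1+a(a+b)/t)^{α−2} exp(−a(a+b)/(4t))`. -/
theorem stmt7 (α β : ℝ) (hα : 3 / 2 < α) (hβ : 3 / 2 < β) :
    ∃ c C : ℝ, 0 < c ∧ 0 < C ∧ ∀ a b t : ℝ, 0 < a → 0 < b → 0 < t →
      c * t ^ (α - 1) * a ^ (β + 1 - α) * (a + b) ^ (1 - α - β) *
          (1 + a * (a + b) / t) ^ (α - 2) * Real.exp (-2 * a * (a + b) / t) ≤
        (∫ u in Set.Ioo (1 / 2 : ℝ) 1,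
          (1 - u) ^ (-α) * (u + b / a) ^ (-β) *
            Real.exp (-((a + b) ^ 2 * u ^ 2) / ((1 - u) * t * (u + b / a)))) ∧
      (∫ u in Set.Ioo (1 / 2 : ℝ) 1,
          (1 - u) ^ (-α) * (u + b / a) ^ (-β) *
            Real.exp (-((a + b) ^ 2 * u ^ 2) / ((1 - u) * t * (u + b / a)))) ≤
        C * t ^ (α - 1) * a ^ (β + 1 - α) * (a + b) ^ (1 - α - β) *
          (1 + a * (a + b) / t) ^ (α - 2) * Real.exp (-a * (a + b) / (4 * t)) := by
  obtain ⟨c, C, hc, hC, H⟩ := aux_core α β hα hβ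
  refine ⟨c, C, hc, hC, fun a b t ha hb ht => ?_⟩
  have hab : 0 < a + b := by linarith
  have hR : 1 < (a + b) / a := by rw [lt_div_iff₀ ha]; linarith
  have hX : 0 < a * (a + b) / t := by positivity
  have key := H ((a + b) / a) (a * (a + b) / t) hR hX
  have hs : (a + b) / a - 1 = b / a := by field_simp; ring
  rw [hs] at key
  have hP : ((a + b) / a) ^ (-β) * (a * (a + b) / t) ^ (1 - α) =
      t ^ (α - 1) * a ^ (β + 1 - α) * (a + b) ^ (1 - α - β) := by
    have h1 : β + 1 - α = β + (1 - α) := by ring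
    have h2 : 1 - α - β = (1 - α) + (-β) := by ring
    have h3 : α - 1 = -(1 - α) := by ring
    rw [h1, h2, h3, Real.rpow_add ha, Real.rpow_add hab, Real.rpow_neg ht.le,
      Real.div_rpow hab.le ha.le, Real.div_rpow (by positivity) ht.le,
      Real.mul_rpow ha.le hab.le, Real.rpow_neg ha.le]
    field_simp
  rw [hP] at key
  have hI : ∀ u : ℝ, -((a + b) / a * (a * (a + b) / t) * u ^ 2 / ((1 - u) * (u + b / a))) =
      -((a + b) ^ 2 * u ^ 2) / ((1 - u) * t * (u + b / a)) := by
    intro u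
    have h1 : (a + b) / a * (a * (a + b) / t) = (a + b) ^ 2 / t := by field_simp
    rw [h1, neg_div, div_mul_eq_mul_div, div_div]
    congr 2
    ring
  simp only [hI] at key
  have x1 : -2 * (a * (a + b) / t) = -2 * a * (a + b) / t := by ring
  have x2 : -(a * (a + b) / t) / 4 = -a * (a + b) / (4 * t) := by field_simp
  rw [x1, x2] at key
  simp only [← mul_assoc] at key ⊢
  exact key
end

section
/- For every c₁ > 0 there exists a constant c₀ > 0 such that for all u, v > 0 with u/v > c₁: | (1 − e^{−u})/(1 − e^{−v}) − 1 | ≤ c₀ · |u − v| / v. -/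
lemma key_aux (a b : ℝ) (ha : 0 < a) (hab : a ≤ b) :
    (1 - Real.exp (-b)) * a ≤ (1 - Real.exp (-a)) * b := by
  have hb : 0 < b := ha.trans_le hab
  have h := convexOn_exp.2 (Set.mem_univ (-b)) (Set.mem_univ 0)
    (div_nonneg ha.le hb.le) (sub_nonneg.2 ((div_le_one hb).2 hab)) (by ring)
  simp only [smul_eq_mul, mul_zero, add_zero, Real.exp_zero, mul_one] at h
  have e : a / b * -b = -a := by field_simp
  rw [e] at h
  have h2 := mul_le_mul_of_nonneg_right h hb.le
  have e2 : (a / b * Real.exp (-b) + (1 - a / b)) * b = a * Real.exp (-b) + (b - a) := by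
    field_simp
  rw [e2] at h2
  linarith

/-- For every `c₁ > 0` there is `c₀ > 0` such that for all `u, v > 0` with `u/v > c₁`:
`|(1 − e^{−u})/(1 − e^{−v}) − 1| ≤ c₀ |u − v| / v`. -/
theorem stmt9 (c₁ : ℝ) (hc₁ : 0 < c₁) :
    ∃ c₀ : ℝ, 0 < c₀ ∧ ∀ u v : ℝ, 0 < u → 0 < v → c₁ < u / v →
      |(1 - Real.exp (-u)) / (1 - Real.exp (-v)) - 1| ≤ c₀ * |u - v| / v := by
  refine ⟨1, one_pos, fun u v hu hv _ => ?_⟩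
  have hf : 0 < 1 - Real.exp (-v) := by
    have : Real.exp (-v) < 1 := by rw [← Real.exp_zero]; exact Real.exp_lt_exp.2 (by linarith)
    linarith
  rw [div_sub_one hf.ne', abs_div, abs_of_pos hf, one_mul, div_le_div_iff₀ hf hv]
  rcases le_total v u with h | h
  · have k := key_aux v u hv h
    have m : Real.exp (-u) ≤ Real.exp (-v) := Real.exp_le_exp.2 (by linarith)
    rw [abs_of_nonneg (by linarith), abs_of_nonneg (by linarith)]
    linarith
  · have k := key_aux u v hu h
    have m : Real.exp (-v) ≤ Real.exp (-u) := Real.exp_le_exp.2 (by linarith)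
    rw [abs_of_nonpos (by linarith), abs_of_nonpos (by linarith)]
    linarith
end

section
/- Let n ≥ 1 and let x, y be nonzero points of the closed unit ball of ℝⁿ (Euclidean norm). Then | x/|x| − y/|y| | ≤ δ(x) + |x−y| + δ(y) ≤ 2√6 · √( δ((x+y)/2) ), where δ(z) = 1 − |z|. -/
/-- For nonzero `x, y` in the closed unit ball of ℝⁿ, with `δ(z) = 1 − |z|`:
`|x/|x| − y/|y|| ≤ δ(x) + |x−y| + δ(y) ≤ 2√6 √(δ((x+y)/2))`. -/
theorem stmt11 (n : ℕ) (hn : 1 ≤ n) (x y : EuclideanSpace ℝ (Fin n))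
    (hx0 : x ≠ 0) (hy0 : y ≠ 0) (hx : ‖x‖ ≤ 1) (hy : ‖y‖ ≤ 1) :
    ‖‖x‖⁻¹ • x - ‖y‖⁻¹ • y‖ ≤ (1 - ‖x‖) + ‖x - y‖ + (1 - ‖y‖) ∧
    (1 - ‖x‖) + ‖x - y‖ + (1 - ‖y‖) ≤
      2 * Real.sqrt 6 * Real.sqrt (1 - ‖(1 / 2 : ℝ) • (x + y)‖) := by
  have key : ∀ z : EuclideanSpace ℝ (Fin n), z ≠ 0 → ‖z‖ ≤ 1 → ‖‖z‖⁻¹ • z - z‖ = 1 - ‖z‖ := by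
    intro z hz hz1
    have hp : 0 < ‖z‖ := norm_pos_iff.mpr hz
    have h1 : ‖z‖⁻¹ • z - z = (‖z‖⁻¹ - 1) • z := by rw [sub_smul, one_smul]
    have h2 : 0 ≤ ‖z‖⁻¹ - 1 := by
      have := (one_le_inv₀ hp).mpr hz1
      linarith
    rw [h1, norm_smul, Real.norm_of_nonneg h2]
    field_simp
  constructor
  · have e : ‖x‖⁻¹ • x - ‖y‖⁻¹ • y
        = (‖x‖⁻¹ • x - x) + (x - y) + (y - ‖y‖⁻¹ • y) := by abel
    have hk := key y hy0 hy
    rw [norm_sub_rev] at hk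
    rw [e, ← key x hx0 hx, ← hk]
    exact norm_add₃_le
  · have hpar := parallelogram_law_with_norm ℝ x y
    have hm : ‖(1 / 2 : ℝ) • (x + y)‖ = ‖x + y‖ / 2 := by
      rw [norm_smul, Real.norm_of_nonneg (by norm_num)]
      ring
    have htri := norm_add_le x y
    have hxn := norm_nonneg x
    have hyn := norm_nonneg y
    have hdn := norm_nonneg (x - y)
    rw [hm]
    generalize ‖x + y‖ = m at *
    generalize ‖x - y‖ = d at *
    generalize ‖x‖ = a at *
    generalize ‖y‖ = b at *
    have ht : 0 ≤ 1 - m / 2 := by linarith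
    refine (sq_le_sq₀ (by linarith) (by positivity)).mp ?_
    rw [mul_pow, mul_pow, Real.sq_sqrt (by norm_num), Real.sq_sqrt ht]
    nlinarith [sq_nonneg ((1 - a) + (1 - b) - d), mul_nonneg hxn (sub_nonneg.2 hx), mul_nonneg hyn (sub_nonneg.2 hy), mul_nonneg (add_nonneg hxn hyn) (add_nonneg (sub_nonneg.2 hx) (sub_nonneg.2 hy)), sq_nonneg (1 - m / 2)]
end

section
/- Let n ≥ 1 and let x, y be nonzero points of the open unit ball B = B(0,1) ⊂ ℝⁿ (Euclidean norm). Then 1 − √( 1 − (1/4)| x/|x| − y/|y| |² ) ≤ (1/4)| x/|x| − y/|y| |² ≤ 6 · δ((x+y)/2), where δ(z) = 1 − |z|. -/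
/-- For nonzero `x, y` in the open unit ball of ℝⁿ, with `δ(z) = 1 − |z|`:
`1 − √(1 − (1/4)|x/|x| − y/|y||²) ≤ (1/4)|x/|x| − y/|y||² ≤ 6 δ((x+y)/2)`. -/
theorem stmt12 (n : ℕ) (hn : 1 ≤ n) (x y : EuclideanSpace ℝ (Fin n))
    (hx0 : x ≠ 0) (hy0 : y ≠ 0) (hx : ‖x‖ < 1) (hy : ‖y‖ < 1) :
    1 - Real.sqrt (1 - (1 / 4) * ‖‖x‖⁻¹ • x - ‖y‖⁻¹ • y‖ ^ 2) ≤
      (1 / 4) * ‖‖x‖⁻¹ • x - ‖y‖⁻¹ • y‖ ^ 2 ∧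
    (1 / 4) * ‖‖x‖⁻¹ • x - ‖y‖⁻¹ • y‖ ^ 2 ≤ 6 * (1 - ‖(1 / 2 : ℝ) • (x + y)‖) := by
  have ha : 0 < ‖x‖ := norm_pos_iff.mpr hx0
  have hb : 0 < ‖y‖ := norm_pos_iff.mpr hy0
  have hu : ‖‖x‖⁻¹ • x‖ = 1 := by
    rw [norm_smul, norm_inv, norm_norm, inv_mul_cancel₀ ha.ne']
  have hv : ‖‖y‖⁻¹ • y‖ = 1 := by
    rw [norm_smul, norm_inv, norm_norm, inv_mul_cancel₀ hb.ne']
  have hxu : x = ‖x‖ • (‖x‖⁻¹ • x) := by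
    rw [smul_smul, mul_inv_cancel₀ ha.ne', one_smul]
  have hyv : y = ‖y‖ • (‖y‖⁻¹ • y) := by
    rw [smul_smul, mul_inv_cancel₀ hb.ne', one_smul]
  have hi : inner ℝ x y = ‖x‖ * (‖y‖ * inner ℝ (‖x‖⁻¹ • x) (‖y‖⁻¹ • y)) := by
    conv_lhs => rw [hxu, hyv]
    rw [real_inner_smul_left, real_inner_smul_right]
  have hs := norm_sub_sq_real (‖x‖⁻¹ • x) (‖y‖⁻¹ • y)
  have hc := abs_real_inner_le_norm (‖x‖⁻¹ • x) (‖y‖⁻¹ • y)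
  have hm := norm_add_sq_real x y
  rw [hi] at hm
  rw [hu, hv] at hs hc
  have hh : ‖(1 / 2 : ℝ) • (x + y)‖ = ‖x + y‖ / 2 := by
    rw [norm_smul, Real.norm_eq_abs, abs_of_pos (by norm_num)]; ring
  rw [hh, hs]
  generalize (inner ℝ (‖x‖⁻¹ • x) (‖y‖⁻¹ • y) : ℝ) = c at *
  obtain ⟨hc1, hc2⟩ := abs_le.mp hc
  constructor
  · have : 1 - (1 / 4) * ((1:ℝ) ^ 2 - 2 * c + 1 ^ 2) ≤
        Real.sqrt (1 - (1 / 4) * ((1:ℝ) ^ 2 - 2 * c + 1 ^ 2)) := by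
      apply Real.le_sqrt_of_sq_le
      nlinarith
    linarith
  · have hab : ‖x‖ * ‖y‖ ≤ 1 := by nlinarith
    have hab0 : 0 < ‖x‖ * ‖y‖ := mul_pos ha hb
    have ha2 : ‖x‖ ^ 2 ≤ 1 := by nlinarith
    have hb2 : ‖y‖ ^ 2 ≤ 1 := by nlinarith
    have key : ‖x + y‖ ^ 2 ≤ 10 / 3 + 2 * c / 3 := by
      rw [hm]
      rcases le_total 0 c with h | h
      · nlinarith [mul_le_mul_of_nonneg_right hab h]
      · nlinarith [mul_nonneg hab0.le (neg_nonneg.mpr h)]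
    have : ‖x + y‖ ≤ 2 - (1 - c) / 6 := by
      refine le_of_abs_le (abs_le_of_sq_le_sq ?_ (by linarith))
      nlinarith [sq_nonneg (1 - c)]
    linarith
end

section
/- Let n ≥ 1 and let x, y be points of the open unit ball B = B(0,1) ⊂ ℝⁿ (Euclidean norm) with x ≠ 0 and δ(x) < (1/64)·δ(y), where δ(z) = 1 − |z|. Then the open ball B( (1/32)y + (31/32)x, δ(y)/64 ) is contained in the open ball B( (15/16)·x/|x|, 1/16 ). -/
/-- If `x, y` lie in the open unit ball of ℝⁿ, `x ≠ 0` and `δ(x) < δ(y)/64`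
(with `δ(z) = 1 − |z|`), then
`B((1/32)y + (31/32)x, δ(y)/64) ⊆ B((15/16)·x/|x|, 1/16)`. -/
theorem stmt13 (n : ℕ) (hn : 1 ≤ n) (x y : EuclideanSpace ℝ (Fin n))
    (hx0 : x ≠ 0) (hx : ‖x‖ < 1) (hy : ‖y‖ < 1)
    (hδ : 1 - ‖x‖ < (1 / 64) * (1 - ‖y‖)) :
    Metric.ball ((1 / 32 : ℝ) • y + (31 / 32 : ℝ) • x) ((1 - ‖y‖) / 64) ⊆
      Metric.ball ((15 / 16 : ℝ) • (‖x‖⁻¹ • x)) (1 / 16) := by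
  apply Metric.ball_subset_ball'
  have hxp : 0 < ‖x‖ := norm_pos_iff.mpr hx0
  have hy0 : 0 ≤ ‖y‖ := norm_nonneg y
  have key : ((1 / 32 : ℝ) • y + (31 / 32 : ℝ) • x) - (15 / 16 : ℝ) • (‖x‖⁻¹ • x)
      = (1 / 32 : ℝ) • y + ((31 / 32 : ℝ) * ‖x‖ - 15 / 16) • (‖x‖⁻¹ • x) := by
    have h : x = ‖x‖ • (‖x‖⁻¹ • x) := by
      rw [smul_smul, mul_inv_cancel₀ hxp.ne', one_smul]
    rw [sub_smul, mul_smul, ← h]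
    abel
  have he : ‖‖x‖⁻¹ • x‖ = 1 := by
    rw [norm_smul, norm_inv, norm_norm, inv_mul_cancel₀ hxp.ne']
  rw [dist_eq_norm, key]
  have h1 := norm_add_le ((1 / 32 : ℝ) • y) (((31 / 32 : ℝ) * ‖x‖ - 15 / 16) • (‖x‖⁻¹ • x))
  rw [norm_smul (1 / 32 : ℝ) y, norm_smul _ (‖x‖⁻¹ • x), he, Real.norm_eq_abs, Real.norm_eq_abs,
    abs_of_pos (by norm_num : (0 : ℝ) < 1 / 32),
    abs_of_nonneg (by linarith : (0 : ℝ) ≤ 31 / 32 * ‖x‖ - 15 / 16)] at h1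
  linarith
end

section
/- Let n ≥ 1 and let x, y, z ∈ ℝⁿ (Euclidean norm) with x ≠ y, z ≠ x and z ≠ y, and let z′ be the orthogonal projection of z onto the affine line through x and y. Then (|x−z| + |y−z|)² ≥ |x−y|² + (1/4) · |z−z′|² · |x−y|² / ( |x−z| · |y−z| ). -/
open scoped RealInnerProductSpace

/-- For distinct points `x, y ∈ ℝⁿ` and `z` distinct from both, with `z′` the orthogonal
projection of `z` onto the affine line through `x` and `y`:
`(|x−z| + |y−z|)² ≥ |x−y|² + (1/4)|z−z′|²|x−y|²/(|x−z||y−z|)`. -/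
theorem stmt14 (n : ℕ) (hn : 1 ≤ n) (x y z z' : EuclideanSpace ℝ (Fin n))
    (hxy : x ≠ y) (hzx : z ≠ x) (hzy : z ≠ y)
    (hline : ∃ s : ℝ, z' = x + s • (y - x))
    (hperp : ⟪z - z', y - x⟫ = 0) :
    ‖x - y‖ ^ 2 + (1 / 4) * ‖z - z'‖ ^ 2 * ‖x - y‖ ^ 2 / (‖x - z‖ * ‖y - z‖) ≤
      (‖x - z‖ + ‖y - z‖) ^ 2 := by
  obtain ⟨s, hs⟩ := hline
  have ha : ‖x - z‖ ^ 2 = ‖z - z'‖ ^ 2 + s ^ 2 * ‖x - y‖ ^ 2 := by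
    have e : z - x = (z - z') + s • (y - x) := by rw [hs]; abel
    rw [norm_sub_rev x z, norm_sub_rev x y, e, norm_add_sq_real, inner_smul_right, hperp,
      norm_smul, mul_pow, Real.norm_eq_abs, sq_abs]
    ring
  have hb : ‖y - z‖ ^ 2 = ‖z - z'‖ ^ 2 + (s - 1) ^ 2 * ‖x - y‖ ^ 2 := by
    have e : z - y = (z - z') + (s - 1) • (y - x) := by rw [hs, sub_smul, one_smul]; abel
    rw [norm_sub_rev y z, norm_sub_rev x y, e, norm_add_sq_real, inner_smul_right, hperp,
      norm_smul, mul_pow, Real.norm_eq_abs, sq_abs]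
    ring
  have htri : ‖x - y‖ ≤ ‖x - z‖ + ‖y - z‖ := by
    rw [norm_sub_rev y z]; exact norm_sub_le_norm_sub_add_norm_sub x z y
  have ha0 : 0 < ‖x - z‖ := norm_pos_iff.2 (sub_ne_zero.2 hzx.symm)
  have hb0 : 0 < ‖y - z‖ := norm_pos_iff.2 (sub_ne_zero.2 hzy.symm)
  have hc0 : 0 ≤ ‖x - y‖ := norm_nonneg _
  generalize ‖x - z‖ = a at *
  generalize ‖y - z‖ = b at *
  generalize ‖x - y‖ = c at *
  generalize ‖z - z'‖ = h at *
  have heron : 4 * (h ^ 2 * c ^ 2) = ((a + b) ^ 2 - c ^ 2) * (c ^ 2 - (a - b) ^ 2) := by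
    have e : ((a + b) ^ 2 - c ^ 2) * (c ^ 2 - (a - b) ^ 2)
        = 4 * a ^ 2 * b ^ 2 - (a ^ 2 + b ^ 2 - c ^ 2) ^ 2 := by ring
    rw [e, ha, hb]; ring
  have hD : 0 ≤ (a + b) ^ 2 - c ^ 2 := by nlinarith
  have hab : 0 < a * b := mul_pos ha0 hb0
  have key : 4 * (h ^ 2 * c ^ 2) ≤ ((a + b) ^ 2 - c ^ 2) * (4 * (a * b)) := by
    rw [heron]
    apply mul_le_mul_of_nonneg_left _ hD
    nlinarith
  have : (1 / 4) * h ^ 2 * c ^ 2 / (a * b) ≤ (a + b) ^ 2 - c ^ 2 := by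
    rw [div_le_iff₀ hab]
    have : 0 ≤ h ^ 2 * c ^ 2 := by positivity
    linarith
  linarith
end

section
/- Let n ≥ 1, let H ⊆ ℝⁿ be a half-space, let x, y ∈ H and let 0 < s < t. Then the Chapman–Kolmogorov identity holds: ∫_H k_H(s, x, z) · k_H(t−s, z, y) dz = k_H(t, x, y). -/
open MeasureTheory Real
open scoped RealInnerProductSpace

lemma aux_heat_eq (n : ℕ) (x y z : EuclideanSpace ℝ (Fin n)) (s r : ℝ) (hs : 0 < s) (hr : 0 < r) :
    heatKernel n s x z * heatKernel n r z y
      = heatKernel n (s + r) x y * ((π / ((s + r) / (4 * s * r))) ^ ((n : ℝ) / 2))⁻¹ *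
        Real.exp (-((s + r) / (4 * s * r)) * ‖z - (s + r)⁻¹ • (r • x + s • y)‖ ^ 2) := by
  have ht : 0 < s + r := by positivity
  unfold heatKernel
  have hc : (4 * π * s) ^ (-(n : ℝ) / 2) * (4 * π * r) ^ (-(n : ℝ) / 2)
      = (4 * π * (s + r)) ^ (-(n : ℝ) / 2) * ((π / ((s + r) / (4 * s * r))) ^ ((n : ℝ) / 2))⁻¹ := by
    rw [← Real.rpow_neg (by positivity), neg_div, ← Real.mul_rpow (by positivity) (by positivity),
      ← Real.mul_rpow (by positivity) (by positivity)]
    congr 1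
    field_simp
    try ring
  have he : -‖x - z‖ ^ 2 / (4 * s) + -‖z - y‖ ^ 2 / (4 * r)
      = -‖x - y‖ ^ 2 / (4 * (s + r)) +
        -((s + r) / (4 * s * r)) * ‖z - (s + r)⁻¹ • (r • x + s • y)‖ ^ 2 := by
    have h1 : z - (s + r)⁻¹ • (r • x + s • y) = (s + r)⁻¹ • (s • (z - y) - r • (x - z)) := by
      have : z = (s + r)⁻¹ • ((s + r) • z) := by rw [smul_smul, inv_mul_cancel₀ ht.ne', one_smul]
      conv_lhs => rw [this]
      rw [← smul_sub]
      congr 1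
      module
    have h2 : x - y = (x - z) + (z - y) := by abel
    rw [h1, h2]
    generalize x - z = a
    generalize z - y = b
    rw [norm_smul, mul_pow, norm_add_sq_real, norm_sub_sq_real, norm_smul, norm_smul,
      real_inner_smul_left, real_inner_smul_right, real_inner_comm a b]
    simp only [mul_pow, Real.norm_eq_abs, sq_abs]
    field_simp
    ring
  calc _ = ((4 * π * s) ^ (-(n : ℝ) / 2) * (4 * π * r) ^ (-(n : ℝ) / 2)) *
        (Real.exp (-‖x - z‖ ^ 2 / (4 * s)) * Real.exp (-‖z - y‖ ^ 2 / (4 * r))) := by ring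
    _ = _ := by
      rw [hc, ← Real.exp_add, he, Real.exp_add]
      ring

lemma aux_gauss (n : ℕ) (m : EuclideanSpace ℝ (Fin n)) (b : ℝ) (hb : 0 < b) :
    ∫ z : EuclideanSpace ℝ (Fin n), Real.exp (-b * ‖z - m‖ ^ 2) = (π / b) ^ ((n : ℝ) / 2) := by
  rw [integral_sub_right_eq_self (fun z : EuclideanSpace ℝ (Fin n) => Real.exp (-b * ‖z‖ ^ 2)) m,
    GaussianFourier.integral_rexp_neg_mul_sq_norm hb]
  simp

lemma aux_heat_int (n : ℕ) (x y : EuclideanSpace ℝ (Fin n)) (s r : ℝ) (hs : 0 < s) (hr : 0 < r) :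
    ∫ z, heatKernel n s x z * heatKernel n r z y = heatKernel n (s + r) x y := by
  have hb : 0 < (s + r) / (4 * s * r) := by positivity
  simp_rw [aux_heat_eq n x y _ s r hs hr]
  rw [integral_const_mul, aux_gauss n _ _ hb, mul_assoc, inv_mul_cancel₀, mul_one]
  have := Real.pi_pos
  positivity

lemma aux_heat_integrable (n : ℕ) (x y : EuclideanSpace ℝ (Fin n)) (s r : ℝ)
    (hs : 0 < s) (hr : 0 < r) :
    Integrable (fun z => heatKernel n s x z * heatKernel n r z y) := by
  apply Integrable.of_integral_ne_zero
  rw [aux_heat_int n x y s r hs hr]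
  unfold heatKernel
  have := Real.pi_pos
  positivity

/-- reflection across the hyperplane -/
noncomputable def auxR {n : ℕ} (p u z : EuclideanSpace ℝ (Fin n)) : EuclideanSpace ℝ (Fin n) :=
  z - (2 * ⟪z - p, u⟫) • u

lemma auxR_inner {n : ℕ} (p u z : EuclideanSpace ℝ (Fin n)) (hu : ‖u‖ = 1) :
    ⟪auxR p u z - p, u⟫ = -⟪z - p, u⟫ := by
  have : auxR p u z - p = (z - p) - (2 * ⟪z - p, u⟫) • u := by unfold auxR; abel
  rw [this, inner_sub_left, real_inner_smul_left, real_inner_self_eq_norm_sq, hu]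
  ring

lemma auxR_auxR {n : ℕ} (p u z : EuclideanSpace ℝ (Fin n)) (hu : ‖u‖ = 1) :
    auxR p u (auxR p u z) = z := by
  conv_lhs => unfold auxR
  rw [show z - (2 * ⟪z - p, u⟫) • u = auxR p u z from rfl, auxR_inner p u z hu]
  unfold auxR
  module

lemma auxR_norm {n : ℕ} (p u x y : EuclideanSpace ℝ (Fin n)) (hu : ‖u‖ = 1) :
    ‖x - auxR p u y‖ ^ 2 = ‖x - y‖ ^ 2 + 4 * (⟪x - p, u⟫ * ⟪y - p, u⟫) := by
  have h : x - auxR p u y = ((x - p) - (y - p)) + (2 * ⟪y - p, u⟫) • u := by unfold auxR; module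
  have h' : x - y = (x - p) - (y - p) := by abel
  rw [h, h', norm_add_sq_real, norm_smul, hu, real_inner_smul_right, inner_sub_left (x - p) (y - p) u]
  simp only [mul_one, Real.norm_eq_abs, sq_abs]
  ring

lemma auxR_norm' {n : ℕ} (p u x y : EuclideanSpace ℝ (Fin n)) (hu : ‖u‖ = 1) :
    ‖auxR p u x - y‖ = ‖x - auxR p u y‖ := by
  rw [← sq_eq_sq₀ (norm_nonneg _) (norm_nonneg _), norm_sub_rev, auxR_norm p u _ _ hu,
    auxR_norm p u _ _ hu, norm_sub_rev, mul_comm ⟪y - p, u⟫]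

lemma aux_kH {n : ℕ} (p u x y : EuclideanSpace ℝ (Fin n)) (hu : ‖u‖ = 1) (t : ℝ) (ht : 0 < t) :
    halfSpaceKernel n p u t x y = heatKernel n t x y - heatKernel n t x (auxR p u y) := by
  unfold halfSpaceKernel heatKernel
  have : -‖x - auxR p u y‖ ^ 2 / (4 * t)
      = -(⟪x - p, u⟫ * ⟪y - p, u⟫) / t + -‖x - y‖ ^ 2 / (4 * t) := by
    rw [auxR_norm p u _ _ hu]
    field_simp
    ring
  rw [this, Real.exp_add]
  ring

lemma aux_k_symm {n : ℕ} (p u x y : EuclideanSpace ℝ (Fin n)) (hu : ‖u‖ = 1) (t : ℝ) :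
    heatKernel n t (auxR p u x) y = heatKernel n t x (auxR p u y) := by
  unfold heatKernel
  rw [auxR_norm' p u x y hu]

lemma auxR_integral {n : ℕ} (p u : EuclideanSpace ℝ (Fin n)) (hu : ‖u‖ = 1) :
    MeasurePreserving (auxR p u) := by
  have hL := (Submodule.reflection (ℝ ∙ u)ᗮ).measurePreserving
  have h := (measurePreserving_add_right volume p).comp (hL.comp (measurePreserving_sub_right volume p))
  have hfun : auxR p u = (fun x => x + p) ∘ (Submodule.reflection (ℝ ∙ u)ᗮ) ∘ (fun x => x - p) := by
    apply funext
    intro z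
    simp only [Function.comp]
    rw [Submodule.reflection_orthogonal_apply, Submodule.reflection_singleton_apply, hu]
    unfold auxR
    rw [real_inner_comm]
    simp only [RCLike.ofReal_real_eq_id, id, one_pow, div_one]
    module
  rw [hfun]
  exact h

/-- Chapman–Kolmogorov identity for the half-space Dirichlet heat kernel: for a half-space
`H = {z : ⟪z − p, u⟫ > 0}` (with `‖u‖ = 1`), `x, y ∈ H` and `0 < s < t`:
`∫_H k_H(s,x,z) k_H(t−s,z,y) dz = k_H(t,x,y)`. -/
theorem stmt15 (n : ℕ) (hn : 1 ≤ n) (p u : EuclideanSpace ℝ (Fin n)) (hu : ‖u‖ = 1)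
    (x y : EuclideanSpace ℝ (Fin n)) (hx : 0 < ⟪x - p, u⟫) (hy : 0 < ⟪y - p, u⟫)
    (s t : ℝ) (hs : 0 < s) (hst : s < t) :
    (∫ z in {z : EuclideanSpace ℝ (Fin n) | 0 < ⟪z - p, u⟫},
      halfSpaceKernel n p u s x z * halfSpaceKernel n p u (t - s) z y)
      = halfSpaceKernel n p u t x y := by
  obtain ⟨r, rfl⟩ : ∃ r, t = s + r := ⟨t - s, by ring⟩
  have hr : 0 < r := by linarith
  rw [add_sub_cancel_left]
  set H := {z : EuclideanSpace ℝ (Fin n) | 0 < ⟪z - p, u⟫} with hH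
  have hcont : Continuous fun z : EuclideanSpace ℝ (Fin n) => ⟪z - p, u⟫ := by fun_prop
  have hHm : MeasurableSet H := (isOpen_lt continuous_const hcont).measurableSet
  set F := fun z => halfSpaceKernel n p u s x z * halfSpaceKernel n p u r z y with hF
  have hFeq : F = fun z => (heatKernel n s x z * heatKernel n r z y
      - heatKernel n s x z * heatKernel n r z (auxR p u y))
      - (heatKernel n s (auxR p u x) z * heatKernel n r z y
      - heatKernel n s (auxR p u x) z * heatKernel n r z (auxR p u y)) := by
    funext z
    simp only [hF]
    rw [aux_kH p u x z hu s hs, aux_kH p u z y hu r hr, aux_k_symm p u x z hu s]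
    ring
  have i := fun a b => aux_heat_integrable n a b s r hs hr
  have hFi : Integrable F := by
    rw [hFeq]
    exact ((i _ _).sub (i _ _)).sub ((i _ _).sub (i _ _))
  have hFint : ∫ z, F z = 2 * halfSpaceKernel n p u (s + r) x y := by
    rw [hFeq]
    refine (integral_sub ((i _ _).sub (i _ _)) ((i _ _).sub (i _ _))).trans ?_
    simp only [Pi.sub_apply]
    rw [integral_sub (i _ _) (i _ _), integral_sub (i _ _) (i _ _)]
    simp only [aux_heat_int n _ _ s r hs hr]
    rw [aux_kH p u x y hu _ (by linarith), aux_k_symm p u x _ hu, aux_k_symm p u x _ hu,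
      auxR_auxR p u y hu]
    ring
  have hR := auxR_integral p u hu
  have hFR : ∀ z, F (auxR p u z) = F z := by
    intro z
    simp only [hF]
    rw [aux_kH p u x z hu s hs, aux_kH p u z y hu r hr, aux_kH p u x _ hu s hs,
      aux_kH p u _ y hu r hr, auxR_auxR p u z hu, aux_k_symm p u z y hu, aux_k_symm p u z _ hu,
      auxR_auxR p u y hu]
    ring
  have hsplit : ∀ z, F z = H.indicator F z + H.indicator F (auxR p u z) := by
    intro z
    simp only [Set.indicator_apply, hH, Set.mem_ofPred_eq, auxR_inner p u z hu, hFR]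
    rcases lt_trichotomy ⟪z - p, u⟫ 0 with h | h | h
    · rw [if_neg (by linarith), if_pos (by linarith), zero_add]
    · rw [if_neg (by linarith), if_neg (by linarith)]
      simp [hF, halfSpaceKernel, h]
    · rw [if_pos (by linarith), if_neg (by linarith), add_zero]
  have hGi : Integrable (H.indicator F) := hFi.indicator hHm
  have hcomp : ∫ z, H.indicator F (auxR p u z) = ∫ z, H.indicator F z := by
    conv_rhs => rw [← hR.map_eq]
    rw [integral_map hR.aemeasurable]
    rw [hR.map_eq]
    exact hGi.aestronglyMeasurable
  have hfin : ∫ z, F z = 2 * ∫ z in H, F z := by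
    rw [integral_congr_ae (Filter.Eventually.of_forall hsplit)]
    refine (integral_add hGi (hR.integrable_comp_of_integrable hGi)).trans ?_
    simp only [Function.comp]
    rw [hcomp, integral_indicator hHm]
    ring
  linarith
end

section
/- Let n ≥ 2 and work in ℝⁿ with standard basis e₁, …, eₙ and Euclidean norm. Let x = xₙ·eₙ with xₙ > 0 and y = y_{n−1}·e_{n−1} + yₙ·eₙ with y_{n−1} ≥ 0 and yₙ ≥ 0, and suppose x and y lie in the open unit ball B = B(0,1), that δ(x) ≤ δ(y), and that δ(y) < |x−y|/8, where δ(z) = 1 − |z|. Then |x−y|/2 ≤ y_{n−1} ≤ |x−y|. -/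
theorem aux_real (a b c r d : ℝ) (ha : 0 < a) (hb : 0 ≤ b) (hc : 0 ≤ c) (hr : 0 ≤ r) (hd : 0 ≤ d)
    (hr2 : r ^ 2 = b ^ 2 + c ^ 2) (hd2 : d ^ 2 = b ^ 2 + (a - c) ^ 2) (ha1 : a < 1)
    (hra : r ≤ a) (h : 1 - r < d / 8) : d / 2 ≤ b ∧ b ≤ d := by
  refine ⟨?_, ?_⟩
  swap
  · exact abs_le_of_sq_le_sq' (by nlinarith [sq_nonneg (a - c)]) hd |>.2
  have hcr : c ≤ r := (abs_le_of_sq_le_sq' (by nlinarith [sq_nonneg b]) hr).2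
  have hac : 0 ≤ a * c := mul_nonneg ha.le hc
  have hr2a : r ^ 2 ≤ a ^ 2 := by gcongr
  have ha2 : a ^ 2 ≤ 1 := by nlinarith
  have key : d ^ 2 = a ^ 2 + r ^ 2 - 2 * (a * c) := by rw [hd2, hr2]; ring
  by_cases hc2 : c ≤ 1 / 2
  · have hdle : d ≤ 3 / 2 := by nlinarith
    have hrl : 13 / 16 ≤ r := by linarith
    have h1 : (a - c) ^ 2 ≤ (1 - c) ^ 2 := by
      apply pow_le_pow_left₀ <;> linarith
    have : (a - c) ^ 2 ≤ 3 * b ^ 2 := by nlinarith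
    exact (abs_le_of_sq_le_sq' (by nlinarith) hb).2
  · push Not at hc2
    have hd1 : d ≤ 1 := by nlinarith
    have hal : 7 / 8 ≤ a := by linarith
    have h1 : 2 * a * (a - c) ≤ 2 * a * (d * (3 / 4)) := by
      have e : 2 * a * (a - c) = (a - r) * (a + r) + d ^ 2 := by rw [key]; ring
      have e1 : (a - r) * (a + r) ≤ (d / 8) * (2 * a) := by
        apply mul_le_mul <;> linarith
      have e2 : d ^ 2 ≤ d := by
        have := mul_le_mul_of_nonneg_left hd1 hd
        linarith [sq d]
      have e3 : d * (7 / 8) ≤ d * a := mul_le_mul_of_nonneg_left hal hd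
      rw [e]
      linarith
    have h2 : a - c ≤ d * (3 / 4) := le_of_mul_le_mul_left h1 (by linarith)
    have h3 : (a - c) ^ 2 ≤ (d * (3 / 4)) ^ 2 := by
      apply pow_le_pow_left₀ <;> linarith
    exact (abs_le_of_sq_le_sq' (by nlinarith) hb).2

/-- Let `n = m + 2 ≥ 2` and work in ℝⁿ with the standard basis. Let `x = xₙ eₙ` with
`xₙ > 0` and `y = y_{n−1} e_{n−1} + yₙ eₙ` with `y_{n−1}, yₙ ≥ 0`, both in the open unit
ball, with `δ(x) ≤ δ(y)` and `δ(y) < |x−y|/8` (where `δ(z) = 1 − |z|`). Then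
`|x−y|/2 ≤ y_{n−1} ≤ |x−y|`. -/
theorem stmt16 (m : ℕ) (xn yn1 yn : ℝ) (hxn : 0 < xn) (hyn1 : 0 ≤ yn1) (hyn : 0 ≤ yn)
    (x y : EuclideanSpace ℝ (Fin (m + 2)))
    (hx : x = xn • EuclideanSpace.single (Fin.last (m + 1)) (1 : ℝ))
    (hy : y = yn1 • EuclideanSpace.single (⟨m, by omega⟩ : Fin (m + 2)) (1 : ℝ) +
          yn • EuclideanSpace.single (Fin.last (m + 1)) (1 : ℝ))
    (hxB : ‖x‖ < 1) (hyB : ‖y‖ < 1)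
    (hδxy : 1 - ‖x‖ ≤ 1 - ‖y‖) (hδy : 1 - ‖y‖ < ‖x - y‖ / 8) :
    ‖x - y‖ / 2 ≤ yn1 ∧ yn1 ≤ ‖x - y‖ := by
  have hne : (⟨m, by omega⟩ : Fin (m + 2)) ≠ Fin.last (m + 1) := by
    simp [Fin.ext_iff]
  have hnorm : ∀ s t : ℝ, ‖s • EuclideanSpace.single (⟨m, by omega⟩ : Fin (m + 2)) (1 : ℝ) +
      t • EuclideanSpace.single (Fin.last (m + 1)) (1 : ℝ)‖ ^ 2 = s ^ 2 + t ^ 2 := by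
    intro s t
    rw [norm_add_sq_real]
    simp [norm_smul, inner_smul_left, inner_smul_right, EuclideanSpace.inner_single_left, hne,
      hne.symm]
  have hxa : ‖x‖ = xn := by
    rw [hx]; simp [norm_smul, abs_of_pos hxn]
  have hy2 : ‖y‖ ^ 2 = yn1 ^ 2 + yn ^ 2 := by rw [hy]; exact hnorm _ _
  have hd2 : ‖x - y‖ ^ 2 = yn1 ^ 2 + (xn - yn) ^ 2 := by
    rw [← neg_sq yn1, ← hnorm, hx, hy]
    congr 2
    module
  rw [hxa] at hxB hδxy
  exact aux_real xn yn1 yn ‖y‖ ‖x - y‖ hxn hyn1 hyn (norm_nonneg _) (norm_nonneg _) hy2 hd2 hxB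
    (by linarith) hδy
end
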